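/- Let n ≥ 3, let Q₀ be a real quadratic form on ℝ^n satisfying the volume asymptotic condition with constant c₀ > 0, and let δ > 0. For each j ∈ ℕ define A_j = {x ∈ ℝ^n : 0 < Q₀(x) < 2^{-j} and ‖x‖ < 2^{(1/(n-2)+δ)j}}. Then for Haar-almost every g ∈ SL(n,ℝ), there exists j₀ ∈ ℕ such that for all j ≥ j₀ the lattice gℤ^n intersects A_j, i.e., gℤ^n ∩ A_j ≠ ∅. -/

import Mathlib

open MeasureTheory Matrix Filter Asymptotics

/-- The Euclidean norm of a vector in `ℝ^n`. -/
noncomputable def euclNorm {n : ℕ} (x : Fin n → ℝ) : ℝ := Real.sqrt (∑ i, x i ^ 2)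

/-- The quadratic form `x ↦ xᵀ M x` attached to a matrix `M`. -/
def Qform {n : ℕ} (M : Matrix (Fin n) (Fin n) ℝ) (x : Fin n → ℝ) : ℝ := x ⬝ᵥ M.mulVec x

/-- The quadratic form of `M` satisfies the volume asymptotic condition with constant `c₀`:
for all `a < b`, `|Q₀⁻¹((a,b)) ∩ B(0,T)| = c₀ (b-a) T^{n-2} + o(T^{n-2})` as `T → ∞`. -/
def volumeAsymp {n : ℕ} (M : Matrix (Fin n) (Fin n) ℝ) (c₀ : ℝ) : Prop :=
  ∀ a b : ℝ, a < b →
    (fun T : ℝ =>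
        (volume {x : Fin n → ℝ | Qform M x ∈ Set.Ioo a b ∧ euclNorm x ≤ T}).toReal
          - c₀ * (b - a) * T ^ (n - 2)) =o[atTop] fun T : ℝ => T ^ (n - 2)

/-- `SL(n, ℝ)`. -/
abbrev SLR (n : ℕ) := Matrix.SpecialLinearGroup (Fin n) ℝ

instance (n : ℕ) : TopologicalSpace (SLR n) :=
  TopologicalSpace.induced (fun g : SLR n => (g : Matrix (Fin n) (Fin n) ℝ)) inferInstance

noncomputable instance (n : ℕ) : MeasurableSpace (SLR n) := borel _

/-- The set `A_j = {x ∈ ℝ^n : 0 < Q₀(x) < 2^{-j}, ‖x‖ < 2^{(1/(n-2)+δ) j}}`. -/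
noncomputable def Aset {n : ℕ} (M : Matrix (Fin n) (Fin n) ℝ) (δ : ℝ) (j : ℕ) :
    Set (Fin n → ℝ) :=
  {y : Fin n → ℝ | (0 < Qform M y ∧ Qform M y < (2 : ℝ) ^ (-(j : ℝ))) ∧
    euclNorm y < (2 : ℝ) ^ ((1 / ((n : ℝ) - 2) + δ) * j)}

open scoped Pointwise Topology

/-- A measurable set invariant under left multiplication by a dense set of elements is null
or conull for Haar measure. -/
theorem ae_mem_of_dense_left_invariant {G : Type*} [Group G] [TopologicalSpace G]
    [IsTopologicalGroup G] [LocallyCompactSpace G] [SecondCountableTopology G]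
    [MeasurableSpace G] [BorelSpace G] (μ : Measure G) [μ.IsHaarMeasure] [μ.InnerRegular]
    {E : Set G} (hE : MeasurableSet E) (hpos : μ E ≠ 0)
    (hd : Dense {g : G | ∀ x, g * x ∈ E ↔ x ∈ E}) : ∀ᵐ x ∂μ, x ∈ E := by
  have key : ∀ g : G, ∀ F : Set G, MeasurableSet F →
      Dense {g : G | ∀ x, g * x ∈ F ↔ x ∈ F} → μ {x | x ∈ F ∧ g * x ∉ F} = 0 := by
    intro g F hF hdF
    by_contra hne
    have hC : MeasurableSet {x | x ∈ F ∧ g * x ∉ F} :=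
      hF.inter ((measurable_const_mul g) hF.compl)
    have hn := Measure.div_mem_nhds_one_of_haar_pos μ _ hC (pos_iff_ne_zero.2 hne)
    have hn' : (fun y => g⁻¹ * y) ⁻¹'
        ({x | x ∈ F ∧ g * x ∉ F} / {x | x ∈ F ∧ g * x ∉ F}) ∈ 𝓝 g := by
      apply (continuous_const_mul g⁻¹).continuousAt.preimage_mem_nhds
      simpa using hn
    obtain ⟨γ, hγ, hγ'⟩ := mem_closure_iff_nhds.1 (hdF g) _ hn'
    obtain ⟨c₁, hc₁, c₂, hc₂, h⟩ := Set.mem_div.1 hγ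
    have h2 : γ * c₂ = g * c₁ := by
      rw [div_eq_iff_eq_mul] at h
      rw [h]; group
    exact hc₁.2 (h2 ▸ (hγ' c₂).2 hc₂.1)
  have hinv : ∀ g : G, (g • ·) ⁻¹' E =ᵐ[μ] E := by
    intro g
    have h1 := key g E hE hd
    have h2 := key g Eᶜ hE.compl (by simpa [not_iff_not] using hd)
    have h1' : ∀ᵐ x ∂μ, ¬ (x ∈ E ∧ g * x ∉ E) := by rw [ae_iff]; simpa using h1
    have h2' : ∀ᵐ x ∂μ, ¬ (x ∈ Eᶜ ∧ g * x ∉ Eᶜ) := by rw [ae_iff]; simpa using h2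
    rw [Filter.eventuallyEq_set]
    filter_upwards [h1', h2'] with x hx hx'
    simp only [Set.mem_compl_iff, not_and, not_not, Set.mem_preimage, smul_eq_mul] at *
    tauto
  have := aeconst_of_forall_preimage_smul_ae_eq G hE.nullMeasurableSet hinv
  rw [Filter.eventuallyConst_set] at this
  rcases this with h | h
  · exact h
  · exact absurd (measure_eq_zero_iff_ae_notMem.2 h) hpos

section SpecialLinear

variable {n : ℕ}

instance : IsTopologicalGroup (SLR n) :=
  Matrix.SpecialLinearGroup.topologicalGroup (n := Fin n) (R := ℝ)

instance : BorelSpace (SLR n) := ⟨rfl⟩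

theorem isClosedEmbedding_coe_SLR :
    Topology.IsClosedEmbedding (fun g : SLR n => (g : Matrix (Fin n) (Fin n) ℝ)) :=
  Matrix.SpecialLinearGroup.isClosedEmbedding_val

instance : T2Space (SLR n) := isClosedEmbedding_coe_SLR.isEmbedding.t2Space

instance : SecondCountableTopology (SLR n) :=
  haveI : SecondCountableTopology (Matrix (Fin n) (Fin n) ℝ) :=
    inferInstanceAs (SecondCountableTopology (Fin n → Fin n → ℝ))
  isClosedEmbedding_coe_SLR.isEmbedding.secondCountableTopology

instance : LocallyCompactSpace (SLR n) :=
  haveI : LocallyCompactSpace (Matrix (Fin n) (Fin n) ℝ) :=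
    inferInstanceAs (LocallyCompactSpace (Fin n → Fin n → ℝ))
  isClosedEmbedding_coe_SLR.locallyCompactSpace

theorem continuous_coe_SLR :
    Continuous (fun g : SLR n => (g : Matrix (Fin n) (Fin n) ℝ)) :=
  continuous_induced_dom

/-- Elements of `SL(n, ℝ)` with bounded entries form a compact set. -/
theorem isCompact_entries_le (B : ℝ) : IsCompact {g : SLR n | ∀ i j, |g i j| ≤ B} := by
  have h : IsCompact (Set.univ.pi fun _ => Set.univ.pi fun _ => Set.Icc (-B) B :
      Set (Fin n → Fin n → ℝ)) :=
    isCompact_univ_pi fun _ => isCompact_univ_pi fun _ => isCompact_Icc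
  have h' := isClosedEmbedding_coe_SLR.isCompact_preimage
    (K := {g : Matrix (Fin n) (Fin n) ℝ | g ∈ (Set.univ.pi fun _ => Set.univ.pi fun _ =>
      Set.Icc (-B) B : Set (Fin n → Fin n → ℝ))}) h
  convert h' using 1
  ext g
  simp only [Set.mem_ofPred_eq, Set.mem_preimage, abs_le]
  exact ⟨fun h i _ j _ => h i j, fun h i j => h i trivial j trivial⟩

end SpecialLinear

section Invariance

variable {n : ℕ}

theorem euclNorm_smul {t : ℝ} (ht : 0 ≤ t) (x : Fin n → ℝ) :
    euclNorm (t • x) = t * euclNorm x := by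
  simp only [euclNorm, Pi.smul_apply, smul_eq_mul, mul_pow, ← Finset.mul_sum]
  rw [Real.sqrt_mul (sq_nonneg t), Real.sqrt_sq ht]

theorem Qform_smul (M : Matrix (Fin n) (Fin n) ℝ) (t : ℝ) (x : Fin n → ℝ) :
    Qform M (t • x) = t ^ 2 * Qform M x := by
  simp only [Qform, Matrix.mulVec_smul, smul_dotProduct, dotProduct_smul, smul_eq_mul]
  ring

theorem continuous_euclNorm : Continuous (euclNorm : (Fin n → ℝ) → ℝ) := by
  unfold euclNorm; fun_prop

theorem continuous_Qform (M : Matrix (Fin n) (Fin n) ℝ) : Continuous (Qform M) := by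
  unfold Qform
  exact continuous_id.dotProduct (continuous_const.matrix_mulVec continuous_id)

/-- A dilated variant of the sets `A_j`. -/
def dilatedSet (M : Matrix (Fin n) (Fin n) ℝ) (δ D : ℝ) (j : ℕ) : Set (Fin n → ℝ) :=
  {y | 0 < Qform M y ∧ Qform M y < D * (2 : ℝ) ^ (-(j : ℝ)) ∧
    euclNorm y ≤ D * (2 : ℝ) ^ ((1 / ((n : ℝ) - 2) + δ) * j)}

theorem dilatedSet_smul_mem {M : Matrix (Fin n) (Fin n) ℝ} {δ D D' t : ℝ} {j : ℕ}
    (ht : 0 < t) (h1 : t * D ≤ D') (h2 : t ^ 2 * D ≤ D') {y : Fin n → ℝ}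
    (hy : y ∈ dilatedSet M δ D j) : t • y ∈ dilatedSet M δ D' j := by
  obtain ⟨a, b, c⟩ := hy
  refine ⟨?_, ?_, ?_⟩
  · rw [Qform_smul]; positivity
  · rw [Qform_smul]
    calc t ^ 2 * Qform M y < t ^ 2 * (D * (2 : ℝ) ^ (-(j : ℝ))) := by gcongr
      _ = (t ^ 2 * D) * (2 : ℝ) ^ (-(j : ℝ)) := by ring
      _ ≤ _ := by gcongr
  · rw [euclNorm_smul ht.le]
    calc t * euclNorm y ≤ t * (D * (2 : ℝ) ^ ((1 / ((n : ℝ) - 2) + δ) * j)) := by gcongr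
      _ = (t * D) * (2 : ℝ) ^ ((1 / ((n : ℝ) - 2) + δ) * j) := by ring
      _ ≤ _ := by gcongr

theorem measurableSet_dilatedSet (M : Matrix (Fin n) (Fin n) ℝ) (δ D : ℝ) (j : ℕ) :
    MeasurableSet (dilatedSet M δ D j) :=
  (measurableSet_lt measurable_const (continuous_Qform M).measurable).inter
    ((measurableSet_lt (continuous_Qform M).measurable measurable_const).inter
      (measurableSet_le continuous_euclNorm.measurable measurable_const))

/-- The integer vector `x` regarded as a real vector. -/
def castVec (x : Fin n → ℤ) : Fin n → ℝ := fun i => (x i : ℝ)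

theorem measurable_mulVec_SLR (y : Fin n → ℝ) :
    Measurable fun g : SLR n => (g : Matrix (Fin n) (Fin n) ℝ) *ᵥ y :=
  (continuous_coe_SLR.matrix_mulVec continuous_const).measurable

/-- The matrices `g` whose lattice meets the `j`-th dilated set. -/
def meetSet (M : Matrix (Fin n) (Fin n) ℝ) (δ D : ℝ) (j : ℕ) : Set (SLR n) :=
  {g | ∃ x : Fin n → ℤ, (g : Matrix (Fin n) (Fin n) ℝ) *ᵥ castVec x ∈ dilatedSet M δ D j}

theorem measurableSet_meetSet (M : Matrix (Fin n) (Fin n) ℝ) (δ D : ℝ) (j : ℕ) :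
    MeasurableSet (meetSet M δ D j) := by
  have : meetSet M δ D j = ⋃ x : Fin n → ℤ,
      (fun g : SLR n => (g : Matrix (Fin n) (Fin n) ℝ) *ᵥ castVec x) ⁻¹' dilatedSet M δ D j := by
    ext g; simp [meetSet]
  rw [this]
  exact MeasurableSet.iUnion fun x => measurable_mulVec_SLR _ (measurableSet_dilatedSet M δ D j)

/-- The matrices `g` whose lattice eventually meets the dilated sets, for some dilation factor. -/
def eventuallyMeetSet (M : Matrix (Fin n) (Fin n) ℝ) (δ : ℝ) : Set (SLR n) :=
  {g | ∃ D j₀ : ℕ, ∀ j, j₀ ≤ j → g ∈ meetSet M δ D j}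

theorem measurableSet_eventuallyMeetSet (M : Matrix (Fin n) (Fin n) ℝ) (δ : ℝ) :
    MeasurableSet (eventuallyMeetSet M δ) := by
  have : eventuallyMeetSet M δ = ⋃ D : ℕ, ⋃ j₀ : ℕ, ⋂ j : ℕ, ⋂ _ : j₀ ≤ j, meetSet M δ D j := by
    ext g; simp [eventuallyMeetSet]
  rw [this]
  exact MeasurableSet.iUnion fun D => MeasurableSet.iUnion fun j₀ => MeasurableSet.iInter fun j =>
    MeasurableSet.iInter fun _ => measurableSet_meetSet M δ D j

theorem exists_integral_multiple (q : Matrix (Fin n) (Fin n) ℚ) :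
    ∃ N : ℕ, 0 < N ∧ ∃ z : Matrix (Fin n) (Fin n) ℤ, ∀ i j, (z i j : ℚ) = N * q i j := by
  refine ⟨∏ i, ∏ j, (q i j).den, Finset.prod_pos fun i _ => Finset.prod_pos fun j _ =>
    (q i j).den_pos, ?_⟩
  have h : ∀ i j, ∃ z : ℤ, (z : ℚ) = ((∏ i, ∏ j, (q i j).den : ℕ) : ℚ) * q i j := by
    intro i j
    have hd : (q i j).den ∣ ∏ i, ∏ j, (q i j).den :=
      (Finset.dvd_prod_of_mem (fun j => (q i j).den) (Finset.mem_univ j)).trans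
        (Finset.dvd_prod_of_mem (fun i => ∏ j, (q i j).den) (Finset.mem_univ i))
    obtain ⟨c, hc⟩ := hd
    refine ⟨c * (q i j).num, ?_⟩
    rw [hc]
    push_cast
    rw [mul_comm ((q i j).den : ℚ) c, mul_assoc, Rat.den_mul_eq_num]
  choose z hz using h
  exact ⟨z, hz⟩

theorem mem_eventuallyMeetSet_of_mul {M : Matrix (Fin n) (Fin n) ℝ} {δ : ℝ} {g : SLR n}
    (q : Matrix.SpecialLinearGroup (Fin n) ℚ)
    (h : g * Matrix.SpecialLinearGroup.map (algebraMap ℚ ℝ) q ∈ eventuallyMeetSet M δ) :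
    g ∈ eventuallyMeetSet M δ := by
  obtain ⟨N, hN, z, hz⟩ := exists_integral_multiple (q : Matrix (Fin n) (Fin n) ℚ)
  obtain ⟨D, j₀, hD⟩ := h
  refine ⟨N ^ 2 * D, j₀, fun j hj => ?_⟩
  obtain ⟨x, hx⟩ := hD j hj
  refine ⟨z *ᵥ x, ?_⟩
  have hN1 : (1 : ℝ) ≤ N := by exact_mod_cast hN
  have key : castVec (z *ᵥ x) = (N : ℝ) •
      ((Matrix.SpecialLinearGroup.map (algebraMap ℚ ℝ) q : SLR n) : Matrix (Fin n) (Fin n) ℝ) *ᵥ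
        castVec x := by
    ext i
    simp only [castVec, Matrix.mulVec, dotProduct, Int.cast_sum, Int.cast_mul, Pi.smul_apply,
      smul_eq_mul, Finset.mul_sum]
    refine Finset.sum_congr rfl fun k _ => ?_
    have : ((z i k : ℚ) : ℝ) = ((N * (q : Matrix (Fin n) (Fin n) ℚ) i k : ℚ) : ℝ) := by rw [hz]
    push_cast at this
    rw [this, ← mul_assoc]
    simp
  rw [key, Matrix.mulVec_smul, Matrix.mulVec_mulVec]
  refine dilatedSet_smul_mem (by positivity) ?_ ?_ hx
  · push_cast
    have : (N : ℝ) ≤ N ^ 2 := by nlinarith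
    gcongr
  · push_cast; rfl

theorem mul_map_mem_eventuallyMeetSet_iff {M : Matrix (Fin n) (Fin n) ℝ} {δ : ℝ} {g : SLR n}
    (q : Matrix.SpecialLinearGroup (Fin n) ℚ) :
    g * Matrix.SpecialLinearGroup.map (algebraMap ℚ ℝ) q ∈ eventuallyMeetSet M δ ↔
      g ∈ eventuallyMeetSet M δ := by
  refine ⟨mem_eventuallyMeetSet_of_mul q, fun h => mem_eventuallyMeetSet_of_mul q⁻¹ ?_⟩
  rwa [mul_assoc, ← map_mul, mul_inv_cancel, map_one, mul_one]

/-- Rational matrices of determinant one are dense in `SL(n, ℝ)`. -/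
theorem denseRange_map_rat_SLR (hn : 0 < n) :
    DenseRange fun q : Matrix.SpecialLinearGroup (Fin n) ℚ =>
      (Matrix.SpecialLinearGroup.map (algebraMap ℚ ℝ) q : SLR n) := by
  have hdense : DenseRange fun q : Fin n → Fin n → ℚ => fun i j => (q i j : ℝ) :=
    DenseRange.piMap fun _ => DenseRange.piMap fun _ => Rat.denseRange_cast
  intro g
  let i₀ : Fin n := ⟨0, hn⟩
  let F : Matrix (Fin n) (Fin n) ℝ → Matrix (Fin n) (Fin n) ℝ :=
    fun m => m.updateRow i₀ ((m.det)⁻¹ • m i₀)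
  have hF : ∀ m i j, F m i j = if i = i₀ then (m.det)⁻¹ * m i₀ j else m i j := by
    intro m i j
    simp only [F, Matrix.updateRow_apply]
    rfl
  have hg : (g : Matrix (Fin n) (Fin n) ℝ).det = 1 := g.2
  have hFg : F (g : Matrix (Fin n) (Fin n) ℝ) = g := by simp [F, hg]
  have hFc : ContinuousAt F (g : Matrix (Fin n) (Fin n) ℝ) := by
    refine ContinuousAt.update continuousAt_id i₀ ?_
    have hdc : ContinuousAt (fun m : Matrix (Fin n) (Fin n) ℝ => m.det)
      (g : Matrix (Fin n) (Fin n) ℝ) := (continuous_id.matrix_det).continuousAt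
    exact (hdc.inv₀ (by rw [hg]; exact one_ne_zero)).smul (continuous_apply i₀).continuousAt
  rw [isClosedEmbedding_coe_SLR.isEmbedding.isInducing.closure_eq_preimage_closure_image]
  rw [Set.mem_preimage, mem_closure_iff_nhds]
  intro t ht
  have h1 : ∀ᶠ m in 𝓝 (g : Matrix (Fin n) (Fin n) ℝ), F m ∈ t :=
    hFc.eventually_mem (by rwa [hFg])
  have h2 : ∀ᶠ m in 𝓝 (g : Matrix (Fin n) (Fin n) ℝ), m.det ≠ 0 :=
    (continuous_id.matrix_det).continuousAt.eventually_ne (by simp [hg])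
  obtain ⟨m, ⟨hm1, hm2⟩, q, rfl⟩ :=
    mem_closure_iff_nhds.1 (hdense (g : Matrix (Fin n) (Fin n) ℝ)) _ (h1.and h2)
  have hdet : (Matrix.of q).det ≠ 0 := by
    intro h0
    apply hm2
    change Matrix.det ((Matrix.of q).map (algebraMap ℚ ℝ)) = 0
    rw [← RingHom.mapMatrix_apply, ← RingHom.map_det, h0, map_zero]
  refine ⟨_, hm1, _, ⟨⟨(Matrix.of q).updateRow i₀ ((Matrix.of q).det⁻¹ • (Matrix.of q) i₀), ?_⟩,
    rfl⟩, ?_⟩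
  · rw [Matrix.det_updateRow_smul, Matrix.updateRow_eq_self]
    exact inv_mul_cancel₀ hdet
  · have hd2 : Matrix.det (fun i j => (q i j : ℝ)) = (((Matrix.of q).det : ℚ) : ℝ) := by
      change Matrix.det ((Matrix.of q).map (algebraMap ℚ ℝ)) = _
      rw [← RingHom.mapMatrix_apply, ← RingHom.map_det]; rfl
    ext i j
    have e₁ := hF (fun i j => (q i j : ℝ)) i j
    have e₂ : (Matrix.of q).updateRow i₀ ((Matrix.of q).det⁻¹ • (Matrix.of q) i₀) i j =
        if i = i₀ then (Matrix.of q).det⁻¹ * q i₀ j else q i j := by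
      rw [Matrix.updateRow_apply]; rfl
    refine ((congrArg (fun r : ℚ => (r : ℝ)) e₂).trans ?_).trans e₁.symm
    rw [hd2]
    split_ifs
    · push_cast; rfl
    · rfl

/-- Zero-one law: the eventual meeting property holds almost surely as soon as it holds with
positive measure. -/
theorem ae_mem_eventuallyMeetSet (hn : 0 < n) (M : Matrix (Fin n) (Fin n) ℝ) (δ : ℝ)
    (μ : Measure (SLR n)) [μ.IsHaarMeasure]
    (hpos : μ (eventuallyMeetSet M δ)⁻¹ ≠ 0) : ∀ᵐ g ∂μ, g ∈ eventuallyMeetSet M δ := by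
  have h := ae_mem_of_dense_left_invariant μ (measurableSet_eventuallyMeetSet M δ).inv hpos ?_
  · rw [ae_iff] at h ⊢
    rw [← measure_inv_null] at h
    simpa using h
  · refine (denseRange_map_rat_SLR hn).mono ?_
    rintro _ ⟨q, rfl⟩ x
    rw [Set.mem_inv, Set.mem_inv, _root_.mul_inv_rev, ← map_inv]
    exact mul_map_mem_eventuallyMeetSet_iff q⁻¹

end Invariance

section HyperplaneCounting

/-- Second moment bound: if the events `r a x` have probability `1 / p` and are pairwise
uncorrelated except for `y ∈ {x, σ x}`, then few `a` avoid all of them. -/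
theorem card_avoid_mul_card_le {α β : Type*} [Fintype α] [DecidableEq β] (r : α → β → Prop)
    [∀ a x, Decidable (r a x)] (X : Finset β) (σ : β → β) (p : ℝ) (hp : 0 < p)
    (h1 : ∀ x ∈ X, ((Finset.univ.filter fun a => r a x).card : ℝ) * p = Fintype.card α)
    (h2 : ∀ x ∈ X, ∀ y ∈ X, y ≠ x → y ≠ σ x →
      ((Finset.univ.filter fun a => r a x ∧ r a y).card : ℝ) * p ^ 2 ≤ Fintype.card α) :
    ((Finset.univ.filter fun a => ∀ x ∈ X, ¬ r a x).card : ℝ) * X.card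
      ≤ 2 * p * Fintype.card α := by
  set m : ℝ := (Fintype.card α : ℝ) with hm
  let f : α → β → ℝ := fun a x => if r a x then 1 else 0
  let N : α → ℝ := fun a => ∑ x ∈ X, f a x
  have hf : ∀ x, ∑ a, f a x = ((Finset.univ.filter fun a => r a x).card : ℝ) := by
    intro x; simp [f]
  have hff : ∀ x y, ∑ a, f a x * f a y =
      ((Finset.univ.filter fun a => r a x ∧ r a y).card : ℝ) := by
    intro x y
    simp only [f, ← ite_and, mul_ite, mul_one, mul_zero]
    rw [Finset.sum_boole]
    congr 2
    ext a
    simp [and_comm]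
  have hN : p * ∑ a, N a = X.card * m := by
    simp only [N]
    rw [Finset.sum_comm, Finset.mul_sum]
    rw [Finset.sum_congr rfl fun x hx => by rw [hf, mul_comm, h1 x hx]]
    simp
  have hNN : p ^ 2 * ∑ a, N a ^ 2 ≤ X.card * (X.card * m + 2 * (p * m)) := by
    have : ∑ a, N a ^ 2 = ∑ x ∈ X, ∑ y ∈ X, ∑ a, f a x * f a y := by
      simp only [N, sq, Finset.sum_mul_sum]
      rw [Finset.sum_comm]
      exact Finset.sum_congr rfl fun x _ => Finset.sum_comm
    rw [this, Finset.mul_sum, ← nsmul_eq_mul]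
    refine Finset.sum_le_card_nsmul _ _ _ fun x hx => ?_
    rw [Finset.mul_sum]
    have hb : ∀ y ∈ X, p ^ 2 * ∑ a, f a x * f a y ≤
        m + ((if y = x then p * m else 0) + (if y = σ x then p * m else 0)) := by
      intro y hy
      have hpm : 0 ≤ p * m := by positivity
      have hm0 : 0 ≤ m := by positivity
      rw [hff]
      by_cases hyx : y = x ∨ y = σ x
      · have hle : ((Finset.univ.filter fun a => r a x ∧ r a y).card : ℝ) ≤
            ((Finset.univ.filter fun a => r a x).card : ℝ) := by
          refine Nat.cast_le.2 (Finset.card_le_card fun a ha => ?_)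
          exact Finset.mem_filter.2 ⟨Finset.mem_univ a, (Finset.mem_filter.1 ha).2.1⟩
        have : p ^ 2 * ((Finset.univ.filter fun a => r a x ∧ r a y).card : ℝ) ≤ p * m := by
          rw [← h1 x hx]
          calc _ ≤ p ^ 2 * ((Finset.univ.filter fun a => r a x).card : ℝ) := by gcongr
            _ = _ := by ring
        split_ifs <;> first | linarith | tauto
      · push Not at hyx
        rw [if_neg hyx.1, if_neg hyx.2]
        linarith [h2 x hx y hy hyx.1 hyx.2]
    refine (Finset.sum_le_sum hb).trans ?_
    rw [Finset.sum_add_distrib, Finset.sum_add_distrib, Finset.sum_ite_eq', Finset.sum_ite_eq']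
    have hpm : 0 ≤ p * m := by positivity
    simp only [Finset.sum_const, nsmul_eq_mul]
    split_ifs <;> linarith
  have hvar : ∑ a, (p * N a - X.card) ^ 2 ≤ 2 * (X.card : ℝ) * (p * m) := by
    have : ∑ a, (p * N a - X.card) ^ 2 =
        p ^ 2 * ∑ a, N a ^ 2 - 2 * X.card * (p * ∑ a, N a) + m * (X.card : ℝ) ^ 2 := by
      have hc : m * (X.card : ℝ) ^ 2 = ∑ _a : α, (X.card : ℝ) ^ 2 := by simp [hm]
      rw [hc, Finset.mul_sum, Finset.mul_sum, Finset.mul_sum, ← Finset.sum_sub_distrib,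
        ← Finset.sum_add_distrib]
      exact Finset.sum_congr rfl fun a _ => by ring
    rw [this, hN]
    nlinarith [hNN]
  have hlow : ((Finset.univ.filter fun a => ∀ x ∈ X, ¬ r a x).card : ℝ) * (X.card : ℝ) ^ 2 ≤
      ∑ a, (p * N a - X.card) ^ 2 := by
    rw [← nsmul_eq_mul, ← Finset.sum_const]
    refine (Finset.sum_le_sum fun a ha => ?_).trans
      (Finset.sum_le_sum_of_subset_of_nonneg (Finset.subset_univ _) fun a _ _ => sq_nonneg _)
    have h0 : N a = 0 :=
      Finset.sum_eq_zero fun x hx => if_neg ((Finset.mem_filter.1 ha).2 x hx)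
    rw [h0]
    apply le_of_eq
    ring
  rcases X.card.eq_zero_or_pos with h0 | h0
  · rw [h0]; simp; positivity
  · have h0' : (0 : ℝ) < X.card := by exact_mod_cast h0
    have := hlow.trans hvar
    refine le_of_mul_le_mul_right ?_ h0'
    linarith

theorem card_ker_mul_card {F V W : Type*} [Field F] [AddCommGroup V] [Module F V]
    [AddCommGroup W] [Module F W] (f : V →ₗ[F] W)
    (hf : Function.Surjective f) : Nat.card {v // f v = 0} * Nat.card W = Nat.card V := by
  rw [Submodule.card_eq_card_quotient_mul_card (LinearMap.ker f)]
  rw [Nat.card_congr (f.quotKerEquivOfSurjective hf).toEquiv]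
  rfl

variable {n : ℕ} {p : ℕ} [Fact p.Prime]

/-- The reduction of an integer vector modulo `p`. -/
def modVec (p : ℕ) (x : Fin n → ℤ) : Fin n → ZMod p := fun i => (x i : ZMod p)

theorem card_dotProduct_eq_zero_mul (v : Fin n → ZMod p) (hv : v ≠ 0) :
    (Finset.univ.filter fun a : Fin n → ZMod p => a ⬝ᵥ v = 0).card * p = p ^ n := by
  obtain ⟨i, hi⟩ := Function.ne_iff.1 hv
  let f : (Fin n → ZMod p) →ₗ[ZMod p] ZMod p :=
    { toFun := fun a => a ⬝ᵥ v
      map_add' := fun a b => add_dotProduct a b v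
      map_smul' := fun c a => smul_dotProduct c a v }
  have hs : Function.Surjective f := by
    intro t
    refine ⟨Pi.single i (t / v i), ?_⟩
    change Pi.single i (t / v i) ⬝ᵥ v = t
    rw [single_dotProduct, div_mul_cancel₀ _ hi]
  have := card_ker_mul_card f hs
  simp only [Nat.card_eq_fintype_card, ZMod.card, Fintype.card_pi_const] at this
  rw [← this, Fintype.card_subtype]
  rfl

theorem card_dotProduct_pair_eq_zero_mul (v w : Fin n → ZMod p) {i j : Fin n}
    (hvw : v i * w j - v j * w i ≠ 0) :
    (Finset.univ.filter fun a : Fin n → ZMod p => a ⬝ᵥ v = 0 ∧ a ⬝ᵥ w = 0).card * p ^ 2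
      = p ^ n := by
  let f : (Fin n → ZMod p) →ₗ[ZMod p] ZMod p × ZMod p :=
    { toFun := fun a => (a ⬝ᵥ v, a ⬝ᵥ w)
      map_add' := fun a b => by simp [add_dotProduct]
      map_smul' := fun c a => by simp [smul_dotProduct] }
  have hs : Function.Surjective f := by
    rintro ⟨s, t⟩
    set d := v i * w j - v j * w i with hd
    refine ⟨Pi.single i ((s * w j - t * v j) / d) + Pi.single j ((t * v i - s * w i) / d), ?_⟩
    change (_ ⬝ᵥ v, _ ⬝ᵥ w) = _
    simp only [add_dotProduct, single_dotProduct, Prod.mk.injEq]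
    constructor
    · field_simp
      rw [hd]; ring
    · field_simp
      rw [hd]; ring
  have := card_ker_mul_card f hs
  simp only [Nat.card_eq_fintype_card, ZMod.card, Fintype.card_pi_const,
    Fintype.card_prod] at this
  rw [← this, Fintype.card_subtype, sq]
  congr 2
  ext a
  simp [f]

/-- An integer vector is primitive if its entries generate the unit ideal. -/
def IsPrimitiveVec (x : Fin n → ℤ) : Prop := ∃ u : Fin n → ℤ, u ⬝ᵥ x = 1

theorem IsPrimitiveVec.eq_or_eq_neg {x y : Fin n → ℤ} (hx : IsPrimitiveVec x)
    (hy : IsPrimitiveVec y) (h : ∀ i j, x i * y j = x j * y i) : y = x ∨ y = -x := by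
  obtain ⟨u, hu⟩ := hx
  obtain ⟨w, hw⟩ := hy
  have h1 : y = (u ⬝ᵥ y) • x := by
    ext j
    calc y j = (u ⬝ᵥ x) * y j := by rw [hu, one_mul]
      _ = (u ⬝ᵥ y) * x j := by
        simp only [dotProduct, Finset.sum_mul]
        exact Finset.sum_congr rfl fun i _ => by rw [mul_assoc, h i j]; ring
      _ = _ := by simp
  have h2 : (w ⬝ᵥ x) * (u ⬝ᵥ y) = 1 := by
    rw [h1, dotProduct_smul, smul_eq_mul] at hw
    rw [mul_comm]; exact hw
  rcases Int.isUnit_iff.1 (IsUnit.of_mul_eq_one_right _ h2) with h3 | h3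
  · left; rw [h1, h3, one_smul]
  · right; rw [h1, h3]; simp

theorem IsPrimitiveVec.modVec_ne_zero {x : Fin n → ℤ} (hx : IsPrimitiveVec x) :
    modVec p x ≠ 0 := by
  intro h
  obtain ⟨u, hu⟩ := hx
  have h1 : ((u ⬝ᵥ x : ℤ) : ZMod p) = 0 := by
    simp only [dotProduct, Int.cast_sum, Int.cast_mul]
    refine Finset.sum_eq_zero fun i _ => ?_
    have : ((x i : ℤ) : ZMod p) = 0 := congrFun h i
    rw [this, mul_zero]
  rw [hu] at h1
  simp at h1

/-- Few hyperplanes modulo `p` avoid a large set of short primitive vectors. -/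
theorem card_hyperplane_avoid_mul_le (X : Finset (Fin n → ℤ))
    (hX : ∀ x ∈ X, IsPrimitiveVec x) (H : ℤ) (hH : ∀ x ∈ X, ∀ i, |x i| ≤ H)
    (hp : 2 * H ^ 2 < p) :
    ((Finset.univ.filter fun a : Fin n → ZMod p => ∀ x ∈ X, ¬ a ⬝ᵥ modVec p x = 0).card : ℝ)
      * X.card ≤ 2 * p * (p : ℝ) ^ n := by
  have hp0 : (0 : ℝ) < p := by exact_mod_cast (Fact.out : p.Prime).pos
  have hcard : (Fintype.card (Fin n → ZMod p) : ℝ) = (p : ℝ) ^ n := by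
    simp [ZMod.card]
  rw [← hcard]
  refine card_avoid_mul_card_le (fun (a : Fin n → ZMod p) x => a ⬝ᵥ modVec p x = 0) X
    (fun x => -x) p hp0 ?_ ?_
  · intro x hx
    rw [hcard]
    exact_mod_cast card_dotProduct_eq_zero_mul _ (hX x hx).modVec_ne_zero
  · intro x hx y hy hne hne'
    have : ∃ i j, x i * y j ≠ x j * y i := by
      by_contra hcon
      push Not at hcon
      rcases (hX x hx).eq_or_eq_neg (hX y hy) hcon with h | h
      · exact hne h
      · exact hne' h
    obtain ⟨i, j, hij⟩ := this
    have hmod : modVec p x i * modVec p y j - modVec p x j * modVec p y i ≠ 0 := by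
      intro h0
      have h1 : ((x i * y j - x j * y i : ℤ) : ZMod p) = 0 := by
        push_cast; exact h0
      rw [ZMod.intCast_zmod_eq_zero_iff_dvd] at h1
      have h2 : |x i * y j - x j * y i| < p := by
        have e : ∀ k l, |x k * y l| ≤ H ^ 2 := by
          intro k l
          rw [abs_mul, sq]
          exact mul_le_mul (hH x hx k) (hH y hy l) (abs_nonneg _)
            ((abs_nonneg _).trans (hH x hx k))
        calc _ ≤ |x i * y j| + |x j * y i| := abs_sub _ _
          _ ≤ 2 * H ^ 2 := by linarith [e i j, e j i]
          _ < p := hp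
      exact hij (sub_eq_zero.1 (Int.eq_zero_of_abs_lt_dvd h1 h2))
    rw [hcard]
    exact le_of_eq (by exact_mod_cast card_dotProduct_pair_eq_zero_mul _ _ hmod)

end HyperplaneCounting

section PrimitiveCount

variable {n : ℕ}

/-- The integer points `x` with `t • x ∈ S`. -/
def scaledPoints (S : Set (Fin n → ℝ)) (t : ℝ) : Set (Fin n → ℤ) := {x | t • castVec x ∈ S}

theorem abs_le_of_mem_scaledPoints {S : Set (Fin n → ℝ)} {C t : ℝ} (hS : ∀ y ∈ S, ‖y‖ ≤ C)
    (ht : 0 < t) {x : Fin n → ℤ} (hx : x ∈ scaledPoints S t) (i : Fin n) :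
    |(x i : ℝ)| ≤ C / t := by
  have h1 := (norm_le_pi_norm (t • castVec x) i).trans (hS _ hx)
  rw [Pi.smul_apply, smul_eq_mul, Real.norm_eq_abs, abs_mul, abs_of_pos ht] at h1
  rw [le_div_iff₀ ht, mul_comm]
  exact h1

theorem scaledPoints_subset {S : Set (Fin n → ℝ)} {C t : ℝ} (hS : ∀ y ∈ S, ‖y‖ ≤ C)
    (ht : 0 < t) : scaledPoints S t ⊆
      (Fintype.piFinset fun _ : Fin n => Finset.Icc (-⌊C / t⌋) ⌊C / t⌋ : Set (Fin n → ℤ)) := by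
  intro x hx
  rw [Finset.mem_coe, Fintype.mem_piFinset]
  intro i
  have := abs_le_of_mem_scaledPoints hS ht hx i
  rw [Finset.mem_Icc, ← abs_le, Int.le_floor]
  exact_mod_cast this

theorem finite_scaledPoints {S : Set (Fin n → ℝ)} (hS : Bornology.IsBounded S) {t : ℝ}
    (ht : 0 < t) : (scaledPoints S t).Finite := by
  obtain ⟨C, hC⟩ := hS.exists_norm_le
  exact (Finset.finite_toSet _).subset (scaledPoints_subset hC ht)

theorem ncard_scaledPoints_le {S : Set (Fin n → ℝ)} {C t : ℝ} (hC : 0 ≤ C)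
    (hS : ∀ y ∈ S, ‖y‖ ≤ C) (ht : 0 < t) :
    ((scaledPoints S t).ncard : ℝ) ≤ (2 * (C / t) + 1) ^ n := by
  have h1 := Set.ncard_le_ncard (scaledPoints_subset hS ht) (Finset.finite_toSet _)
  rw [Set.ncard_coe_finset, Fintype.card_piFinset_const, Int.card_Icc] at h1
  have h0 : 0 ≤ C / t := by positivity
  have hf : 0 ≤ ⌊C / t⌋ := Int.floor_nonneg.2 h0
  calc ((scaledPoints S t).ncard : ℝ) ≤ ((⌊C / t⌋ + 1 - -⌊C / t⌋).toNat ^ n : ℕ) := by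
        exact_mod_cast h1
    _ = (((⌊C / t⌋ + 1 - -⌊C / t⌋).toNat : ℤ) : ℝ) ^ n := by push_cast; rfl
    _ = (2 * (⌊C / t⌋ : ℝ) + 1) ^ n := by
        rw [Int.toNat_of_nonneg (by omega)]; push_cast; ring
    _ ≤ _ := by
        have := Int.floor_le (C / t)
        have : (0 : ℝ) ≤ ⌊C / t⌋ := by exact_mod_cast hf
        gcongr

theorem ncard_scaledPoints_le_div {S : Set (Fin n → ℝ)} {C : ℝ} (hC : 1 ≤ C)
    (hS : ∀ y ∈ S, ‖y‖ ≤ C) (h0 : (0 : Fin n → ℝ) ∉ S) (hn : 2 ≤ n) {R k : ℕ} (hR : 0 < R)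
    (hk : 0 < k) :
    ((scaledPoints S (k / R)).ncard : ℝ) / (R : ℝ) ^ n ≤ (3 * C) ^ n * (1 / (k : ℝ) ^ 2) := by
  have hR' : (0 : ℝ) < R := by exact_mod_cast hR
  have hk' : (1 : ℝ) ≤ k := by exact_mod_cast hk
  have ht : (0 : ℝ) < k / R := by positivity
  rcases (scaledPoints S (k / R)).eq_empty_or_nonempty with he | ⟨z, hz⟩
  · rw [he, Set.ncard_empty]; simp; positivity
  · have hz0 : z ≠ 0 := by
      rintro rfl
      apply h0
      have : ((k / R : ℝ) • castVec (0 : Fin n → ℤ)) = 0 := by ext i; simp [castVec]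
      rw [← this]; exact hz
    obtain ⟨i, hi⟩ := Function.ne_iff.1 hz0
    have h1 : (1 : ℝ) ≤ |(z i : ℝ)| := by
      exact_mod_cast Int.one_le_abs hi
    have h2 : 1 ≤ C / (k / R) := h1.trans (abs_le_of_mem_scaledPoints hS ht hz i)
    have h3 := ncard_scaledPoints_le (by linarith) hS ht
    rw [div_le_iff₀ (by positivity)]
    calc _ ≤ _ := h3
      _ ≤ (3 * (C / (k / R))) ^ n := by gcongr; linarith
      _ = (3 * C) ^ n * (1 / (k : ℝ) ^ n) * (R : ℝ) ^ n := by
        rw [← _root_.one_div_pow, ← mul_pow, ← mul_pow]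
        congr 1
        field_simp
      _ ≤ _ := by gcongr

theorem volumeReal_smul {S : Set (Fin n → ℝ)} {t : ℝ} (ht : 0 ≤ t) :
    volume.real (t • S) = t ^ n * volume.real S := by
  rw [measureReal_def, Measure.addHaar_smul, ENNReal.toReal_mul,
    ENNReal.toReal_ofReal (abs_nonneg _), Module.finrank_fin_fun, abs_of_nonneg (by positivity),
    measureReal_def]

theorem volume_frontier_smul {S : Set (Fin n → ℝ)} (hf : volume (frontier S) = 0) {t : ℝ}
    (ht : t ≠ 0) : volume (frontier (t • S)) = 0 := by
  have h := (Homeomorph.smulOfNeZero t ht : (Fin n → ℝ) ≃ₜ (Fin n → ℝ)).image_frontier S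
  have : frontier (t • S) = t • frontier S := h.symm
  rw [this, Measure.addHaar_smul, hf, mul_zero]

theorem tendsto_ncard_scaledPoints {S : Set (Fin n → ℝ)} (hb : Bornology.IsBounded S)
    (hm : MeasurableSet S) (hf : volume (frontier S) = 0) {k : ℕ} (hk : 0 < k) :
    Tendsto (fun R : ℕ => ((scaledPoints S (k / R)).ncard : ℝ) / (R : ℝ) ^ n) atTop
      (𝓝 (volume.real S / (k : ℝ) ^ n)) := by
  have hk' : (0 : ℝ) < k := by exact_mod_cast hk
  have hk0 : ((k : ℝ)⁻¹) ≠ 0 := by positivity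
  have hv : volume.real ((k : ℝ)⁻¹ • S) = volume.real S / (k : ℝ) ^ n := by
    rw [volumeReal_smul (by positivity), inv_pow]
    field_simp
  have hfr := volume_frontier_smul hf hk0
  have := tendsto_card_div_pow_atTop_volume ((k : ℝ)⁻¹ • S) (hb.smul₀ _) (hm.const_smul₀ _) hfr
  rw [hv] at this
  refine this.congr' ?_
  filter_upwards [eventually_gt_atTop 0] with R hR
  have hR' : (0 : ℝ) < R := by exact_mod_cast hR
  rw [Fintype.card_fin]
  congr 2
  have hinj : Function.Injective fun x : Fin n → ℤ => (R : ℝ)⁻¹ • castVec x := by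
    intro x y hxy
    have := smul_right_injective _ (inv_ne_zero hR'.ne') hxy
    ext i
    have := congrFun this i
    simpa [castVec] using this
  rw [Nat.card_coe_set_eq, ← Set.ncard_image_of_injective _ hinj]
  congr 1
  ext y
  simp only [Set.mem_inter_iff, Set.mem_image, scaledPoints, Set.mem_ofPred_eq]
  rw [Set.mem_inv_smul_set_iff₀ hk'.ne', Set.mem_inv_smul_set_iff₀ hR'.ne', SetLike.mem_coe,
    Module.Basis.mem_span_iff_repr_mem]
  constructor
  · rintro ⟨h1, h2⟩
    choose x hx using h2
    have hxy : (R : ℝ) • y = castVec x := by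
      ext i
      have := hx i
      simp at this
      simp [castVec, this]
    have hy : y = (R : ℝ)⁻¹ • castVec x := by rw [← hxy, inv_smul_smul₀ hR'.ne']
    refine ⟨x, ?_, hy.symm⟩
    rw [hy, smul_smul] at h1
    exact h1
  · rintro ⟨x, h1, rfl⟩
    refine ⟨?_, fun i => ⟨x i, ?_⟩⟩
    · rw [smul_smul]; exact h1
    · rw [smul_inv_smul₀ hR'.ne']; simp [castVec]

theorem exists_eq_smul_of_not_isPrimitiveVec {x : Fin n → ℤ} (hx : x ≠ 0)
    (h : ¬ IsPrimitiveVec x) : ∃ k : ℕ, 2 ≤ k ∧ ∃ z : Fin n → ℤ, x = (k : ℤ) • z := by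
  obtain ⟨d, hd⟩ := (IsPrincipalIdealRing.principal (Ideal.span (Set.range x))).principal
  have hd' : Ideal.span (Set.range x) = Ideal.span {d} := hd
  have hdvd : ∀ i, d ∣ x i := fun i => by
    rw [← Ideal.mem_span_singleton, ← hd']
    exact Ideal.subset_span ⟨i, rfl⟩
  choose z hz using hdvd
  have hd0 : d ≠ 0 := by
    rintro rfl
    exact hx (funext fun i => by simp [hz i])
  have hd1 : ¬ IsUnit d := by
    intro hu
    have h1 : (1 : ℤ) ∈ Ideal.span (Set.range x) := by
      rw [hd', Ideal.span_singleton_eq_top.2 hu]; trivial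
    rw [Ideal.mem_span_range_iff_exists_fun] at h1
    obtain ⟨c, hc⟩ := h1
    exact h ⟨c, hc⟩
  have h2 : d.natAbs ≠ 1 := fun h => hd1 (Int.isUnit_iff_natAbs_eq.2 h)
  have h3 : d.natAbs ≠ 0 := Int.natAbs_ne_zero.2 hd0
  refine ⟨d.natAbs, by omega, fun i => d.sign * z i, ?_⟩
  ext i
  rw [Pi.smul_apply, smul_eq_mul, ← mul_assoc, mul_comm _ d.sign, Int.sign_mul_natAbs, hz i]

theorem eventually_le_ncard_primitive (hn : 2 ≤ n) {S : Set (Fin n → ℝ)}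
    (hb : Bornology.IsBounded S)
    (hm : MeasurableSet S) (hf : volume (frontier S) = 0) (h0 : (0 : Fin n → ℝ) ∉ S)
    (hV : 0 < volume.real S) :
    ∀ᶠ R : ℕ in atTop, volume.real S / 4 * (R : ℝ) ^ n ≤
      ({x ∈ scaledPoints S (R : ℝ)⁻¹ | IsPrimitiveVec x}.ncard : ℝ) := by
  obtain ⟨C₀, hC₀⟩ := hb.exists_norm_le
  obtain ⟨C, hC1, hC⟩ : ∃ C : ℝ, 1 ≤ C ∧ ∀ y ∈ S, ‖y‖ ≤ C :=
    ⟨max C₀ 1, le_max_right _ _, fun y hy => (hC₀ y hy).trans (le_max_left _ _)⟩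
  set V := volume.real S with hVdef
  let f : ℕ → ℕ → ℝ := fun R k => ((scaledPoints S ((k + 2 : ℕ) / R)).ncard : ℝ) / (R : ℝ) ^ n
  have hsq : Summable fun k : ℕ => 1 / ((k + 2 : ℕ) : ℝ) ^ 2 :=
    (summable_nat_add_iff 2).2 hasSum_zeta_two.summable
  have hsqv : ∑' k : ℕ, 1 / ((k + 2 : ℕ) : ℝ) ^ 2 ≤ 0.7 := by
    have h1 := (hasSum_zeta_two.summable).sum_add_tsum_nat_add 2
    rw [hasSum_zeta_two.tsum_eq] at h1
    simp [Finset.sum_range_succ] at h1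
    have := Real.pi_lt_d2
    have := Real.pi_pos
    push_cast
    simp only [one_div]
    nlinarith
  have hlim : Tendsto (fun R => ∑' k, f R k) atTop (𝓝 (∑' k : ℕ, V / ((k + 2 : ℕ) : ℝ) ^ n)) := by
    refine tendsto_tsum_of_dominated_convergence
      (bound := fun k => (3 * C) ^ n * (1 / ((k + 2 : ℕ) : ℝ) ^ 2)) (hsq.mul_left _)
      (fun k => tendsto_ncard_scaledPoints hb hm hf (by omega)) ?_
    filter_upwards [eventually_gt_atTop 0] with R hR k
    rw [Real.norm_of_nonneg (by positivity)]
    exact ncard_scaledPoints_le_div hC1 hC h0 hn hR (by omega)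
  have hle : ∑' k : ℕ, V / ((k + 2 : ℕ) : ℝ) ^ n ≤ 0.7 * V := by
    have hterm : ∀ k : ℕ, V / ((k + 2 : ℕ) : ℝ) ^ n ≤ V * (1 / ((k + 2 : ℕ) : ℝ) ^ 2) := by
      intro k
      rw [div_eq_mul_one_div]
      have : (1 : ℝ) ≤ ((k + 2 : ℕ) : ℝ) := by exact_mod_cast (by omega : 1 ≤ k + 2)
      gcongr
    calc _ ≤ ∑' k : ℕ, V * (1 / ((k + 2 : ℕ) : ℝ) ^ 2) :=
          Summable.tsum_le_tsum hterm
            (Summable.of_nonneg_of_le (fun k => by positivity) hterm (hsq.mul_left _))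
            (hsq.mul_left _)
      _ = V * ∑' k : ℕ, (1 / ((k + 2 : ℕ) : ℝ) ^ 2) := tsum_mul_left
      _ ≤ _ := by nlinarith
  have h1 := tendsto_ncard_scaledPoints hb hm hf one_pos
  have e1 := h1.eventually_const_lt (u := 0.98 * V) (by
    rw [Nat.cast_one, one_pow, div_one]; linarith)
  have e2 := hlim.eventually_lt_const (u := 0.72 * V) (hle.trans_lt (by linarith))
  filter_upwards [e1, e2, eventually_gt_atTop 0] with R e1 e2 hR
  have hR' : (0 : ℝ) < R := by exact_mod_cast hR
  obtain ⟨N, hN⟩ : ∃ N : ℕ, C * R < N := exists_nat_gt _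
  have hcover : scaledPoints S (R : ℝ)⁻¹ ⊆ {x ∈ scaledPoints S (R : ℝ)⁻¹ | IsPrimitiveVec x} ∪
      ⋃ k ∈ Finset.range N, (fun z : Fin n → ℤ => ((k + 2 : ℕ) : ℤ) • z) ''
        scaledPoints S ((k + 2 : ℕ) / R) := by
    intro x hx
    by_cases hp : IsPrimitiveVec x
    · exact Or.inl ⟨hx, hp⟩
    right
    have hx0 : x ≠ 0 := by
      rintro rfl
      apply h0
      have : ((R : ℝ)⁻¹ • castVec (0 : Fin n → ℤ)) = 0 := by ext i; simp [castVec]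
      rw [← this]; exact hx
    obtain ⟨k, hk, z, rfl⟩ := exists_eq_smul_of_not_isPrimitiveVec hx0 hp
    obtain ⟨i, hi⟩ := Function.ne_iff.1 hx0
    have hz1 : (1 : ℝ) ≤ |(z i : ℝ)| := by
      exact_mod_cast Int.one_le_abs fun h => hi (by simp [h])
    have hbd := abs_le_of_mem_scaledPoints hC (inv_pos.2 hR') hx i
    have hkN : k < N := by
      have : (k : ℝ) ≤ C * R := by
        rw [div_inv_eq_mul] at hbd
        refine le_trans ?_ hbd
        simp [abs_mul]
        nlinarith [(Nat.cast_nonneg k : (0 : ℝ) ≤ k)]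
      exact_mod_cast this.trans_lt hN
    simp only [Set.mem_iUnion]
    refine ⟨k - 2, Finset.mem_range.2 (by omega), z, ?_, ?_⟩
    · have hk2 : k - 2 + 2 = k := by omega
      rw [hk2]
      change ((k : ℝ) / R) • castVec z ∈ S
      have : ((k : ℝ) / R) • castVec z = (R : ℝ)⁻¹ • castVec ((k : ℤ) • z) := by
        ext i; simp [castVec]; ring
      rw [this]; exact hx
    · have hk2 : k - 2 + 2 = k := by omega
      simp only [hk2]
  have hfin : ∀ k : ℕ, (scaledPoints S ((k + 2 : ℕ) / R)).Finite := fun k =>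
    finite_scaledPoints hb (by positivity)
  have hfinP : {x ∈ scaledPoints S (R : ℝ)⁻¹ | IsPrimitiveVec x}.Finite :=
    (finite_scaledPoints hb (inv_pos.2 hR')).subset fun x hx => hx.1
  have hcard := Set.ncard_le_ncard hcover (hfinP.union
    ((Finset.range N).finite_toSet.biUnion fun k _ => (hfin k).image _))
  have hcard2 : ((scaledPoints S (R : ℝ)⁻¹).ncard : ℝ) ≤
      {x ∈ scaledPoints S (R : ℝ)⁻¹ | IsPrimitiveVec x}.ncard +
        ∑ k ∈ Finset.range N, ((scaledPoints S ((k + 2 : ℕ) / R)).ncard : ℝ) := by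
    have h2 := hcard.trans (Set.ncard_union_le _ _)
    have h3 := Finset.set_ncard_biUnion_le (Finset.range N)
      fun k => (fun z : Fin n → ℤ => ((k + 2 : ℕ) : ℤ) • z) '' scaledPoints S ((k + 2 : ℕ) / R)
    have h4 : ∑ k ∈ Finset.range N, ((fun z : Fin n → ℤ => ((k + 2 : ℕ) : ℤ) • z) ''
        scaledPoints S ((k + 2 : ℕ) / R)).ncard ≤
          ∑ k ∈ Finset.range N, (scaledPoints S ((k + 2 : ℕ) / R)).ncard :=
      Finset.sum_le_sum fun k _ => Set.ncard_image_le (hfin k)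
    exact_mod_cast h2.trans (Nat.add_le_add_left (h3.trans h4) _)
  have hsum : ∑ k ∈ Finset.range N, ((scaledPoints S ((k + 2 : ℕ) / R)).ncard : ℝ) ≤
      0.72 * V * (R : ℝ) ^ n := by
    have hs : Summable (f R) := Summable.of_nonneg_of_le (fun k => by positivity)
      (fun k => ncard_scaledPoints_le_div hC1 hC h0 hn hR (by omega)) (hsq.mul_left _)
    have := (hs.sum_le_tsum (Finset.range N) fun k _ => by positivity).trans e2.le
    rw [← Finset.sum_div, div_le_iff₀ (by positivity)] at this
    exact this
  rw [Nat.cast_one, one_div, lt_div_iff₀ (by positivity)] at e1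
  nlinarith [pow_pos hR' n, mul_pos hV (pow_pos hR' n)]

/-- Among the hyperplanes modulo `p`, with `p` comparable to `R ^ n`, only a small proportion
avoids the integer points of the dilated set `R • S`, if `S` has large volume. -/
theorem eventually_ncard_avoid_le (hn : 3 ≤ n) {S : Set (Fin n → ℝ)}
    (hb : Bornology.IsBounded S)
    (hm : MeasurableSet S) (hf : volume (frontier S) = 0) (h0 : (0 : Fin n → ℝ) ∉ S)
    (hV : 0 < volume.real S) :
    ∀ᶠ R : ℕ in atTop, ∀ p : ℕ, p.Prime → R ^ n < p → p ≤ 2 * R ^ n →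
      ({a : Fin n → ZMod p | ∀ x ∈ scaledPoints S (R : ℝ)⁻¹, ¬ a ⬝ᵥ modVec p x = 0}.ncard : ℝ)
        ≤ 16 / volume.real S * (p : ℝ) ^ n := by
  obtain ⟨C, hC⟩ := hb.exists_norm_le
  obtain ⟨N, hN⟩ : ∃ N : ℕ, C ≤ N := exists_nat_ge C
  filter_upwards [eventually_le_ncard_primitive (by omega) hb hm hf h0 hV,
    eventually_ge_atTop (2 * N ^ 2 + 1)] with R hR hRN p hp hp1 hp2
  have : Fact p.Prime := ⟨hp⟩
  have hR0 : 0 < R := by omega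
  have hR' : (0 : ℝ) < R := by exact_mod_cast hR0
  have hfin : {x ∈ scaledPoints S (R : ℝ)⁻¹ | IsPrimitiveVec x}.Finite :=
    (finite_scaledPoints hb (inv_pos.2 hR')).subset fun x hx => hx.1
  have key := card_hyperplane_avoid_mul_le (p := p) hfin.toFinset
    (fun x hx => ((hfin.mem_toFinset).1 hx).2) (N * R : ℤ) (fun x hx i => by
      have h1 := abs_le_of_mem_scaledPoints hC (inv_pos.2 hR') ((hfin.mem_toFinset).1 hx).1 i
      rw [div_inv_eq_mul] at h1
      have h2 : |(x i : ℝ)| ≤ N * R := h1.trans (by gcongr)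
      exact_mod_cast h2) (by
      have h1 : 2 * (N * R) ^ 2 < R ^ n := by
        calc 2 * (N * R) ^ 2 = (2 * N ^ 2) * R ^ 2 := by ring
          _ < R * R ^ 2 := by gcongr; omega
          _ = R ^ 3 := by ring
          _ ≤ R ^ n := Nat.pow_le_pow_right hR0 hn
      exact_mod_cast h1.trans hp1)
  rw [← Set.ncard_eq_toFinset_card _ hfin] at key
  set A := (Finset.univ.filter fun a : Fin n → ZMod p =>
    ∀ x ∈ hfin.toFinset, ¬ a ⬝ᵥ modVec p x = 0) with hA
  have hsub : ({a : Fin n → ZMod p | ∀ x ∈ scaledPoints S (R : ℝ)⁻¹,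
      ¬ a ⬝ᵥ modVec p x = 0}.ncard : ℝ) ≤ A.card := by
    rw [← Set.ncard_coe_finset A]
    refine Nat.cast_le.2 (Set.ncard_le_ncard (fun a ha => ?_) A.finite_toSet)
    exact Finset.mem_coe.2 (Finset.mem_filter.2 ⟨Finset.mem_univ _, fun x hx =>
      ha x ((hfin.mem_toFinset).1 hx).1⟩)
  refine hsub.trans ?_
  have h1 : (A.card : ℝ) * (volume.real S / 4 * (R : ℝ) ^ n) ≤
      16 / volume.real S * (p : ℝ) ^ n * (volume.real S / 4 * (R : ℝ) ^ n) := by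
    calc (A.card : ℝ) * (volume.real S / 4 * (R : ℝ) ^ n) ≤ _ := by gcongr
      _ ≤ 2 * p * (p : ℝ) ^ n := key
      _ ≤ 2 * (2 * (R : ℝ) ^ n) * (p : ℝ) ^ n := by gcongr; exact_mod_cast hp2
      _ = _ := by field_simp; ring
  exact le_of_mul_le_mul_right h1 (by positivity)

end PrimitiveCount

section Shells

variable {n : ℕ}

/-- A bounded measurable set avoiding the origin whose frontier has measure zero. -/
structure IsJordanRegion (S : Set (Fin n → ℝ)) : Prop where
  isBounded : Bornology.IsBounded S
  measurableSet : MeasurableSet S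
  volume_frontier : volume (frontier S) = 0
  zero_notMem : (0 : Fin n → ℝ) ∉ S

theorem IsJordanRegion.smul {S : Set (Fin n → ℝ)} (hS : IsJordanRegion S) {t : ℝ} (ht : t ≠ 0) :
    IsJordanRegion (t • S) where
  isBounded := hS.isBounded.smul₀ _
  measurableSet := hS.measurableSet.const_smul₀ _
  volume_frontier := volume_frontier_smul hS.volume_frontier ht
  zero_notMem := by
    rw [Set.mem_smul_set_iff_inv_smul_mem₀ ht, smul_zero]
    exact hS.zero_notMem

theorem volumeReal_preimage_mulVec (h : SLR n) (S : Set (Fin n → ℝ)) :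
    volume.real {y | (h : Matrix (Fin n) (Fin n) ℝ) *ᵥ y ∈ S} = volume.real S := by
  have hd : LinearMap.det (toLin' (h : Matrix (Fin n) (Fin n) ℝ)) = 1 := by
    rw [LinearMap.det_toLin', h.det_coe]
  have := Measure.addHaar_preimage_linearMap (volume : Measure (Fin n → ℝ))
    (f := toLin' (h : Matrix (Fin n) (Fin n) ℝ)) (by rw [hd]; exact one_ne_zero) S
  rw [hd] at this
  simp only [inv_one, abs_one, ENNReal.ofReal_one, one_mul] at this
  rw [measureReal_def, measureReal_def, ← this]
  rfl

theorem IsJordanRegion.preimage_mulVec {S : Set (Fin n → ℝ)} (hS : IsJordanRegion S) (h : SLR n) :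
    IsJordanRegion {y | (h : Matrix (Fin n) (Fin n) ℝ) *ᵥ y ∈ S} where
  isBounded := by
    have : {y | (h : Matrix (Fin n) (Fin n) ℝ) *ᵥ y ∈ S} =
        (toLin' ((h⁻¹ : SLR n) : Matrix (Fin n) (Fin n) ℝ)).toContinuousLinearMap '' S := by
      ext y
      simp only [Set.mem_ofPred_eq, Set.mem_image, LinearMap.coe_toContinuousLinearMap',
        toLin'_apply]
      have e1 : ((h⁻¹ : SLR n) : Matrix (Fin n) (Fin n) ℝ) * (h : Matrix (Fin n) (Fin n) ℝ) = 1 :=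
        congrArg (fun g : SLR n => (g : Matrix (Fin n) (Fin n) ℝ)) (inv_mul_cancel h)
      have e2 : (h : Matrix (Fin n) (Fin n) ℝ) * ((h⁻¹ : SLR n) : Matrix (Fin n) (Fin n) ℝ) = 1 :=
        congrArg (fun g : SLR n => (g : Matrix (Fin n) (Fin n) ℝ)) (mul_inv_cancel h)
      constructor
      · intro hy
        exact ⟨_, hy, by rw [mulVec_mulVec, e1, one_mulVec]⟩
      · rintro ⟨z, hz, rfl⟩
        rwa [mulVec_mulVec, e2, one_mulVec]
    rw [this]
    exact (ContinuousLinearMap.lipschitz _).isBounded_image hS.isBounded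
  measurableSet :=
    (continuous_const.matrix_mulVec continuous_id).measurable hS.measurableSet
  volume_frontier := by
    have hc : Continuous fun y : Fin n → ℝ => (h : Matrix (Fin n) (Fin n) ℝ) *ᵥ y :=
      continuous_const.matrix_mulVec continuous_id
    refine measure_mono_null (hc.frontier_preimage_subset S) ?_
    have hd : LinearMap.det (toLin' (h : Matrix (Fin n) (Fin n) ℝ)) ≠ 0 := by
      rw [LinearMap.det_toLin', h.det_coe]; exact one_ne_zero
    have := Measure.addHaar_preimage_linearMap (volume : Measure (Fin n → ℝ)) hd (frontier S)
    rw [hS.volume_frontier, mul_zero] at this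
    exact this
  zero_notMem := by
    simp only [Set.mem_ofPred_eq, mulVec_zero]
    exact hS.zero_notMem

theorem abs_apply_le_euclNorm (y : Fin n → ℝ) (i : Fin n) : |y i| ≤ euclNorm y := by
  rw [← Real.sqrt_sq_eq_abs]
  exact Real.sqrt_le_sqrt (Finset.single_le_sum (f := fun i => y i ^ 2)
    (fun i _ => sq_nonneg _) (Finset.mem_univ i))

theorem isBounded_euclNorm_le (T : ℝ) : Bornology.IsBounded {y : Fin n → ℝ | euclNorm y ≤ T} := by
  refine isBounded_iff_forall_norm_le.2 ⟨max T 0, fun y hy => ?_⟩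
  refine (pi_norm_le_iff_of_nonneg (le_max_right _ _)).2 fun i => ?_
  exact (abs_apply_le_euclNorm y i).trans (le_trans hy (le_max_left _ _))

theorem convex_euclNorm_le (T : ℝ) : Convex ℝ {y : Fin n → ℝ | euclNorm y ≤ T} := by
  have h : {y : Fin n → ℝ | euclNorm y ≤ T} =
      (WithLp.linearEquiv 2 ℝ (Fin n → ℝ)).symm.toLinearMap ⁻¹'
        Metric.closedBall (0 : EuclideanSpace ℝ (Fin n)) T := by
    ext y
    simp [euclNorm, EuclideanSpace.norm_eq]
  rw [h]
  exact (convex_closedBall (0 : EuclideanSpace ℝ (Fin n)) T).linear_preimage _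

/-- The part of a thickened level set of the form inside a ball. -/
def shell (M : Matrix (Fin n) (Fin n) ℝ) (a b T : ℝ) : Set (Fin n → ℝ) :=
  {x | Qform M x ∈ Set.Ioo a b ∧ euclNorm x ≤ T}

theorem isJordanRegion_shell {M : Matrix (Fin n) (Fin n) ℝ} {a b : ℝ} (T : ℝ) (ha : 0 < a)
    (hab : a < b) (hva : volume {x | Qform M x = a} = 0) (hvb : volume {x | Qform M x = b} = 0) :
    IsJordanRegion (shell M a b T) where
  isBounded := (isBounded_euclNorm_le T).subset fun y hy => hy.2
  measurableSet := ((continuous_Qform M).measurable measurableSet_Ioo).inter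
    (measurableSet_le continuous_euclNorm.measurable measurable_const)
  volume_frontier := by
    have h1 : volume (frontier (Qform M ⁻¹' Set.Ioo a b)) = 0 := by
      refine measure_mono_null ((continuous_Qform M).frontier_preimage_subset _) ?_
      rw [frontier_Ioo hab]
      exact measure_mono_null (t := {x | Qform M x = a} ∪ {x | Qform M x = b})
        (fun x hx => hx) (measure_union_null hva hvb)
    have h2 := (convex_euclNorm_le (n := n) T).addHaar_frontier volume
    refine measure_mono_null (frontier_inter_subset _ _) (measure_union_null ?_ ?_)
    · exact measure_mono_null Set.inter_subset_left h1
    · exact measure_mono_null Set.inter_subset_right h2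
  zero_notMem := by
    rintro ⟨⟨h, -⟩, -⟩
    simp [Qform] at h
    linarith

theorem exists_null_levels (M : Matrix (Fin n) (Fin n) ℝ) : ∃ a b : ℝ, 0 < a ∧ a < b ∧ b < 1 ∧
    volume {x | Qform M x = a} = 0 ∧ volume {x | Qform M x = b} = 0 := by
  have hc := Measure.countable_meas_level_set_pos (μ := (volume : Measure (Fin n → ℝ)))
    (continuous_Qform M).measurable
  have h : ∀ u v : ℝ, u < v → ∃ a, u < a ∧ a < v ∧ volume {x | Qform M x = a} = 0 := by
    intro u v huv
    obtain ⟨a, ha, ha'⟩ := (hc.dense_compl ℝ).exists_between huv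
    exact ⟨a, ha'.1, ha'.2, nonpos_iff_eq_zero.1 (not_lt.1 ha)⟩
  obtain ⟨a, ha0, ha, hva⟩ := h 0 (1 / 2) (by norm_num)
  obtain ⟨b, hb0, hb, hvb⟩ := h (1 / 2) 1 (by norm_num)
  exact ⟨a, b, ha0, by linarith, hb, hva, hvb⟩

/-- The sets contained in `dilatedSet M δ 1 j` of large volume used in the counting argument. -/
def scaledShell (M : Matrix (Fin n) (Fin n) ℝ) (δ a b : ℝ) (j : ℕ) : Set (Fin n → ℝ) :=
  (2 : ℝ) ^ (-(j : ℝ) / 2) • shell M a b ((2 : ℝ) ^ ((1 / 2 + 1 / ((n : ℝ) - 2) + δ) * j))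

theorem scaledShell_subset (M : Matrix (Fin n) (Fin n) ℝ) {δ a b : ℝ} (ha : 0 < a) (hb : b < 1)
    (j : ℕ) : scaledShell M δ a b j ⊆ dilatedSet M δ 1 j := by
  rintro _ ⟨y, ⟨⟨h1, h2⟩, h3⟩, rfl⟩
  have hs : ((2 : ℝ) ^ (-(j : ℝ) / 2)) ^ 2 = (2 : ℝ) ^ (-(j : ℝ)) := by
    rw [← Real.rpow_natCast, ← Real.rpow_mul (by norm_num)]
    congr 1; push_cast; ring
  have hpos : (0 : ℝ) < (2 : ℝ) ^ (-(j : ℝ)) := by positivity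
  simp only [dilatedSet, Set.mem_ofPred_eq, Qform_smul, hs]
  refine ⟨mul_pos hpos (ha.trans h1), ?_, ?_⟩
  · nlinarith
  · rw [euclNorm_smul (by positivity), one_mul]
    calc _ ≤ (2 : ℝ) ^ (-(j : ℝ) / 2) * (2 : ℝ) ^ ((1 / 2 + 1 / ((n : ℝ) - 2) + δ) * j) := by gcongr
      _ = _ := by
        rw [← Real.rpow_add (by norm_num)]
        congr 1; ring

theorem eventually_le_volume_scaledShell (hn : 3 ≤ n) {M : Matrix (Fin n) (Fin n) ℝ} {c₀ : ℝ}
    (hc₀ : 0 < c₀) (hvol : volumeAsymp M c₀) {δ : ℝ} (hδ : 0 < δ) {a b : ℝ} (hab : a < b) :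
    ∀ᶠ j : ℕ in atTop,
      c₀ * (b - a) / 2 * ((2 : ℝ) ^ δ) ^ j ≤ volume.real (scaledShell M δ a b j) := by
  have hn' : (3 : ℝ) ≤ n := by exact_mod_cast hn
  have hn2 : (0 : ℝ) < (n : ℝ) - 2 := by linarith
  have hba : 0 < c₀ * (b - a) := mul_pos hc₀ (by linarith)
  have h1 := (hvol a b hab).bound (c := c₀ * (b - a) / 2) (by linarith)
  have hpos : 0 < 1 / 2 + 1 / ((n : ℝ) - 2) + δ := by positivity
  have htend : Tendsto (fun j : ℕ => (2 : ℝ) ^ ((1 / 2 + 1 / ((n : ℝ) - 2) + δ) * j)) atTop atTop :=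
    (tendsto_rpow_atTop_of_base_gt_one 2 (by norm_num)).comp
      (tendsto_natCast_atTop_atTop.const_mul_atTop hpos)
  filter_upwards [htend.eventually h1] with j hj
  set T := (2 : ℝ) ^ ((1 / 2 + 1 / ((n : ℝ) - 2) + δ) * j) with hT
  have hT0 : 0 < T := by positivity
  have hj' : c₀ * (b - a) / 2 * T ^ (n - 2) ≤ volume.real (shell M a b T) := by
    rw [Real.norm_of_nonneg (pow_nonneg hT0.le (n - 2)), Real.norm_eq_abs] at hj
    have := (abs_le.1 hj).1
    rw [measureReal_def]
    change _ ≤ (volume {x : Fin n → ℝ | Qform M x ∈ Set.Ioo a b ∧ euclNorm x ≤ T}).toReal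
    linarith
  rw [scaledShell, volumeReal_smul (by positivity)]
  calc _ ≤ c₀ * (b - a) / 2 * (((2 : ℝ) ^ (-(j : ℝ) / 2)) ^ n * T ^ (n - 2)) := by
        gcongr
        rw [hT, ← Real.rpow_natCast, ← Real.rpow_natCast, ← Real.rpow_natCast,
          ← Real.rpow_mul (by norm_num), ← Real.rpow_mul (by norm_num),
          ← Real.rpow_mul (by norm_num), ← Real.rpow_add (by norm_num), Nat.cast_sub (by omega)]
        apply Real.rpow_le_rpow_of_exponent_le (by norm_num)
        have : -(j : ℝ) / 2 * n + (1 / 2 + 1 / ((n : ℝ) - 2) + δ) * j * (n - (2 : ℕ)) =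
            δ * j * (n - 2) := by
          push_cast
          field_simp
          ring
        rw [this]
        have : 0 ≤ δ * j := by positivity
        nlinarith
    _ = ((2 : ℝ) ^ (-(j : ℝ) / 2)) ^ n * (c₀ * (b - a) / 2 * T ^ (n - 2)) := by ring
    _ ≤ _ := by gcongr

theorem exists_jordanRegions (hn : 3 ≤ n) {M : Matrix (Fin n) (Fin n) ℝ} {c₀ : ℝ}
    (hc₀ : 0 < c₀) (hvol : volumeAsymp M c₀) {δ : ℝ} (hδ : 0 < δ) :
    ∃ (S : ℕ → Set (Fin n → ℝ)) (j₀ : ℕ),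
      (∀ j, j₀ ≤ j → IsJordanRegion (S j) ∧ S j ⊆ dilatedSet M δ 1 j ∧ 0 < volume.real (S j)) ∧
      ∀ J, ∑ j ∈ Finset.Ico j₀ J, 16 / volume.real (S j) ≤ 1 / 8 := by
  obtain ⟨a, b, ha, hab, hb, hva, hvb⟩ := exists_null_levels M
  set c := c₀ * (b - a) / 2 with hc
  have hc0 : 0 < c := by
    have : 0 < c₀ * (b - a) := mul_pos hc₀ (by linarith)
    positivity
  set q : ℝ := ((2 : ℝ) ^ δ)⁻¹ with hq
  have hq0 : 0 < q := by positivity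
  have hq1 : q < 1 := inv_lt_one_of_one_lt₀ (Real.one_lt_rpow (by norm_num) hδ)
  have hlim : Tendsto (fun j : ℕ => 16 / c * (q ^ j / (1 - q))) atTop (𝓝 0) := by
    have :=
      ((tendsto_pow_atTop_nhds_zero_of_lt_one hq0.le hq1).div_const (1 - q)).const_mul (16 / c)
    simpa using this
  obtain ⟨j₀, hj₀⟩ := eventually_atTop.1 ((eventually_le_volume_scaledShell hn hc₀ hvol hδ hab).and
    (hlim.eventually_le_const (u := 1 / 8) (by norm_num)))
  have hlow : ∀ j, j₀ ≤ j → c * (q ^ j)⁻¹ ≤ volume.real (scaledShell M δ a b j) := by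
    intro j hj
    have := (hj₀ j hj).1
    rwa [hq, inv_pow, inv_inv]
  refine ⟨scaledShell M δ a b, j₀, fun j hj => ⟨?_, scaledShell_subset M ha hb j, ?_⟩, fun J => ?_⟩
  · exact (isJordanRegion_shell _ ha hab hva hvb).smul (by positivity)
  · exact lt_of_lt_of_le (by positivity) (hlow j hj)
  · calc _ ≤ ∑ j ∈ Finset.Ico j₀ J, 16 / c * q ^ j := by
          refine Finset.sum_le_sum fun j hj => ?_
          have h1 := hlow j (Finset.mem_Ico.1 hj).1
          calc 16 / volume.real (scaledShell M δ a b j) ≤ 16 / (c * (q ^ j)⁻¹) := by gcongr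
            _ = _ := by field_simp
      _ = 16 / c * ∑ j ∈ Finset.Ico j₀ J, q ^ j := by rw [Finset.mul_sum]
      _ ≤ 16 / c * (q ^ j₀ / (1 - q)) := by
          gcongr
          exact geom_sum_Ico_le_of_lt_one hq0.le hq1
      _ ≤ _ := (hj₀ j₀ le_rfl).2

end Shells

section Averaging

/-- If almost all points of `K` belong to at least half of a growing family of finite
configurations, then some configuration is good for a fixed proportion of `K`. -/
theorem exists_ge_measure_section {G : Type*} [MeasurableSpace G] (ν : Measure G) {K : Set G}
    (hK : MeasurableSet K) (hK0 : ν K ≠ 0) (hKtop : ν K ≠ ⊤) (α : ℕ → Type*)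
    [∀ R, Fintype (α R)] [∀ R, Nonempty (α R)] (A : ∀ R, G → Set (α R))
    (hA : ∀ R a, MeasurableSet {h | a ∈ A R h})
    (hcard : ∀ h ∈ K, ∀ᶠ R in atTop, Fintype.card (α R) ≤ 2 * (A R h).ncard) (R₀ : ℕ) :
    ∃ R, R₀ ≤ R ∧ ∃ a : α R, ν K / 4 ≤ ν (K ∩ {h | a ∈ A R h}) := by
  classical
  by_contra! hcon
  have hne : ∀ R, (Fintype.card (α R) : ENNReal) ≠ 0 := fun R => by
    simp [Fintype.card_ne_zero]
  have hnt : ∀ R, (Fintype.card (α R) : ENNReal) ≠ ⊤ := fun R => ENNReal.natCast_ne_top _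
  let F : ℕ → G → ENNReal := fun R h =>
    (∑ a : α R, {h | a ∈ A R h}.indicator (fun _ => (1 : ENNReal)) h) / Fintype.card (α R)
  have hF : ∀ R, Measurable (F R) := fun R =>
    (Finset.measurable_fun_sum _ fun a _ => measurable_const.indicator (hA R a)).div_const _
  have hFint : ∀ R, R₀ ≤ R → ∫⁻ h in K, F R h ∂ν ≤ ν K / 4 := by
    intro R hR
    simp only [F, div_eq_mul_inv]
    rw [lintegral_mul_const _
      (Finset.measurable_fun_sum _ fun a _ => measurable_const.indicator (hA R a)),
      lintegral_finsetSum _ fun a _ => measurable_const.indicator (hA R a)]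
    rw [← div_eq_mul_inv, ← div_eq_mul_inv]
    refine ENNReal.div_le_of_le_mul ?_
    calc ∑ a : α R, ∫⁻ h in K, {h | a ∈ A R h}.indicator (fun _ => (1 : ENNReal)) h ∂ν
        ≤ ∑ _a : α R, ν K / 4 := by
          refine Finset.sum_le_sum fun a _ => ?_
          rw [lintegral_indicator_const (hA R a), one_mul, Measure.restrict_apply (hA R a),
            Set.inter_comm]
          exact (hcon R hR a).le
      _ = _ := by simp [mul_comm]
  have hFlow : ∀ h ∈ K, (1 / 2 : ENNReal) ≤ liminf (fun R => F R h) atTop := by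
    intro h hh
    refine le_liminf_of_le (by isBoundedDefault) ?_
    filter_upwards [hcard h hh] with R hR
    have hsum : ∑ a : α R, {h | a ∈ A R h}.indicator (fun _ => (1 : ENNReal)) h
        = ((A R h).ncard : ENNReal) := by
      simp only [Set.indicator_apply, Set.mem_ofPred_eq]
      rw [Set.ncard_eq_toFinset_card', Finset.sum_boole]
      congr 2
      ext a
      simp
    simp only [F]
    rw [hsum, ENNReal.le_div_iff_mul_le (Or.inl (hne R)) (Or.inl (hnt R)), one_div,
      ENNReal.inv_mul_le_iff (by norm_num) (by norm_num)]
    exact_mod_cast hR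
  have h1 : ν K / 2 ≤ ν K / 4 := by
    calc ν K / 2 = ∫⁻ _ in K, (1 / 2 : ENNReal) ∂ν := by
          rw [setLIntegral_const, one_div, mul_comm, div_eq_mul_inv]
      _ ≤ ∫⁻ h in K, liminf (fun R => F R h) atTop ∂ν := setLIntegral_mono' hK hFlow
      _ ≤ liminf (fun R => ∫⁻ h in K, F R h ∂ν) atTop := lintegral_liminf_le hF
      _ ≤ ν K / 4 := by
          refine liminf_le_of_le (by isBoundedDefault) fun b hb => ?_
          obtain ⟨R, hR, hR'⟩ := (hb.and (eventually_ge_atTop R₀)).exists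
          exact hR.trans (hFint R hR')
  have hpos : 0 < (ν K).toReal := ENNReal.toReal_pos hK0 hKtop
  have h2 := ENNReal.toReal_mono (ENNReal.div_ne_top hKtop (by norm_num)) h1
  simp only [ENNReal.toReal_div, ENNReal.toReal_ofNat] at h2
  linarith

end Averaging

section Boxes

variable {n : ℕ}

/-- A large cube centred far out on the `i`-th coordinate axis. -/
def axisBox (n : ℕ) (i : Fin n) : Set (Fin n → ℝ) :=
  Metric.closedBall (Pi.single i (2 * n * (64 * n) : ℝ)) (64 * n)

theorem isJordanRegion_axisBox (i : Fin n) : IsJordanRegion (axisBox n i) where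
  isBounded := Metric.isBounded_closedBall
  measurableSet := measurableSet_closedBall
  volume_frontier := (convex_closedBall _ _).addHaar_frontier _
  zero_notMem := by
    intro h
    have hn : (1 : ℝ) ≤ n := by exact_mod_cast (Fin.pos i)
    rw [axisBox, mem_closedBall_iff_norm, zero_sub, norm_neg] at h
    have := (norm_le_pi_norm _ i).trans h
    rw [Pi.single_eq_same, Real.norm_of_nonneg (by positivity)] at this
    nlinarith

theorem volumeReal_axisBox (i : Fin n) : volume.real (axisBox n i) = (2 * (64 * n : ℝ)) ^ n := by
  rw [axisBox, measureReal_def, Real.volume_pi_closedBall _ (by positivity), Fintype.card_fin,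
    ENNReal.toReal_ofReal (by positivity)]

theorem abs_sub_le_of_mem_axisBox {i : Fin n} {y : Fin n → ℝ} (hy : y ∈ axisBox n i) (k : Fin n) :
    |y k - (Pi.single i (2 * n * (64 * n) : ℝ) : Fin n → ℝ) k| ≤ 64 * n := by
  rw [axisBox, mem_closedBall_iff_norm] at hy
  exact (norm_le_pi_norm (y - Pi.single i (2 * n * (64 * n) : ℝ)) k).trans hy

theorem abs_le_of_mem_axisBox {i : Fin n} {y : Fin n → ℝ} (hy : y ∈ axisBox n i) (k : Fin n) :
    |y k| ≤ 2 * n * (64 * n) + 64 * n := by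
  have h1 := abs_sub_le_of_mem_axisBox hy k
  have h2 : |(Pi.single i (2 * n * (64 * n) : ℝ) : Fin n → ℝ) k| ≤ 2 * n * (64 * n) := by
    rw [Pi.single_apply]
    split_ifs
    · rw [abs_of_nonneg (by positivity)]
    · rw [abs_zero]; positivity
  have h3 := abs_add_le (y k - (Pi.single i (2 * n * (64 * n) : ℝ) : Fin n → ℝ) k)
    ((Pi.single i (2 * n * (64 * n) : ℝ) : Fin n → ℝ) k)
  rw [sub_add_cancel] at h3
  linarith

theorem det_ne_zero_of_mem_axisBox (A : Matrix (Fin n) (Fin n) ℝ)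
    (hA : ∀ i, (fun k => A k i) ∈ axisBox n i) : A.det ≠ 0 := by
  refine det_ne_zero_of_sum_row_lt_diag fun k => ?_
  have hn : (1 : ℝ) ≤ n := by exact_mod_cast (Fin.pos k)
  have hoff : ∀ i ∈ Finset.univ.erase k, ‖A k i‖ ≤ 64 * n := by
    intro i hi
    have := abs_sub_le_of_mem_axisBox (hA i) k
    rw [Pi.single_apply, if_neg (Finset.ne_of_mem_erase hi).symm, sub_zero] at this
    exact this
  have hdiag := abs_sub_le_of_mem_axisBox (hA k) k
  rw [Pi.single_eq_same] at hdiag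
  have h1 := (Finset.sum_le_card_nsmul _ _ _ hoff)
  rw [Finset.card_erase_of_mem (Finset.mem_univ k), Finset.card_univ, Fintype.card_fin,
    nsmul_eq_mul, Nat.cast_pred (Fin.pos k)] at h1
  have h2 : 2 * n * (64 * n) - 64 * n ≤ A k k := by linarith [(abs_le.1 hdiag).1]
  have h3 : A k k ≤ ‖A k k‖ := Real.le_norm_self _
  nlinarith

end Boxes

section Sublattice

variable {n : ℕ} {p : ℕ} [Fact p.Prime]

theorem dvd_det_of_dotProduct_eq_zero {a : Fin n → ZMod p} (ha : a ≠ 0)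
    (U : Matrix (Fin n) (Fin n) ℤ) (hU : ∀ i, a ⬝ᵥ modVec p (fun k => U k i) = 0) :
    (p : ℤ) ∣ U.det := by
  rw [← ZMod.intCast_zmod_eq_zero_iff_dvd]
  have h1 : ((U.det : ℤ) : ZMod p) = (U.map (Int.castRingHom (ZMod p))).det := by
    rw [← RingHom.mapMatrix_apply, ← RingHom.map_det]
    rfl
  rw [h1]
  exact exists_vecMul_eq_zero_iff.1 ⟨a, ha, funext hU⟩

theorem exists_mulVec_eq_smul {a : Fin n → ZMod p} (ha : a ≠ 0)
    (W : Matrix (Fin n) (Fin n) ℤ) (hW : ∀ i, a ⬝ᵥ modVec p (fun k => W k i) = 0) :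
    ∃ m : ℤ, W.det = p * m ∧ ∀ z, a ⬝ᵥ modVec p z = 0 → ∃ u : Fin n → ℤ, W *ᵥ u = m • z := by
  have hp0 : (p : ℤ) ≠ 0 := by exact_mod_cast (Fact.out : p.Prime).ne_zero
  obtain ⟨m, hm⟩ := dvd_det_of_dotProduct_eq_zero ha W hW
  refine ⟨m, hm, fun z hz => ?_⟩
  have hdvd : ∀ i, (p : ℤ) ∣ W.cramer z i := by
    intro i
    rw [cramer_apply]
    refine dvd_det_of_dotProduct_eq_zero ha _ fun k => ?_
    by_cases hki : k = i
    · subst hki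
      simpa using hz
    · simpa [hki] using hW k
  choose u hu using hdvd
  refine ⟨u, ?_⟩
  have h1 : W.cramer z = (p : ℤ) • u := funext hu
  have h2 := mulVec_cramer W z
  rw [h1, mulVec_smul, hm, mul_smul] at h2
  exact smul_right_injective _ hp0 h2

/-- A nondegenerate system of short vectors in a sublattice of index `p` yields a unimodular
matrix of bounded size whose lattice contains bounded multiples of all sublattice vectors. -/
theorem exists_SLR_of_sublattice (hn : 0 < n) {R : ℕ} (hR : 0 < R) (hRp : R ^ n < p)
    {a : Fin n → ZMod p} (ha : a ≠ 0) {B : ℝ}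
    (W : Matrix (Fin n) (Fin n) ℤ) (hW : ∀ i, a ⬝ᵥ modVec p (fun k => W k i) = 0)
    (hWB : ∀ k i, |(W k i : ℝ)| ≤ B * R) (hdet : 0 < W.det) :
    ∃ v : SLR n, (∀ k i, |(v : Matrix (Fin n) (Fin n) ℝ) k i| ≤ B) ∧
      ∀ z, a ⬝ᵥ modVec p z = 0 → ∃ (u : Fin n → ℤ) (t : ℝ), 0 < t ∧ t ≤ n.factorial * B ^ n ∧
        (v : Matrix (Fin n) (Fin n) ℝ) *ᵥ castVec u = t • ((R : ℝ)⁻¹ • castVec z) := by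
  have hR' : (0 : ℝ) < R := by exact_mod_cast hR
  have hRp' : (R : ℝ) ^ n < p := by exact_mod_cast hRp
  have hp0 : (0 : ℝ) < p := (by positivity : (0 : ℝ) ≤ R ^ n).trans_lt hRp'
  obtain ⟨m, hm, hmz⟩ := exists_mulVec_eq_smul ha W hW
  have hm1 : 1 ≤ m := by
    rw [hm] at hdet
    have : (0 : ℤ) ≤ p := by positivity
    exact pos_of_mul_pos_right hdet this
  have hm1' : (1 : ℝ) ≤ m := by exact_mod_cast hm1
  let V : Matrix (Fin n) (Fin n) ℝ := (R : ℝ)⁻¹ • W.map (Int.cast : ℤ → ℝ)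
  have hVdet : V.det = m * (p / (R : ℝ) ^ n) := by
    have h1 : (W.map (Int.cast : ℤ → ℝ)).det = ((W.det : ℤ) : ℝ) :=
      (RingHom.map_det (Int.castRingHom ℝ) W).symm
    rw [det_smul, Fintype.card_fin, h1, hm]
    push_cast
    rw [inv_pow]
    field_simp
  have hVB : ∀ k i, |V k i| ≤ B := by
    intro k i
    change |(R : ℝ)⁻¹ * (W k i : ℝ)| ≤ B
    rw [abs_mul, abs_of_pos (inv_pos.2 hR'), inv_mul_le_iff₀ hR', mul_comm]
    exact hWB k i
  have hB : 0 ≤ B := (abs_nonneg _).trans (hVB ⟨0, hn⟩ ⟨0, hn⟩)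
  have hmV : (m : ℝ) ≤ V.det := by
    rw [hVdet]
    exact le_mul_of_one_le_right (by linarith) ((one_le_div (by positivity)).2 hRp'.le)
  have hV1 : 1 ≤ V.det := hm1'.trans hmV
  have hVle : V.det ≤ n.factorial * B ^ n := by
    have := det_le (A := V) (abv := AbsoluteValue.abs) (x := B) hVB
    rw [Fintype.card_fin, nsmul_eq_mul] at this
    exact (le_abs_self _).trans this
  obtain ⟨t, ht0, ht1, ht⟩ : ∃ t : ℝ, 0 < t ∧ t ≤ 1 ∧ t ^ n * V.det = 1 := by
    refine ⟨V.det ^ (-(1 / n : ℝ)), by positivity, ?_, ?_⟩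
    · exact Real.rpow_le_one_of_one_le_of_nonpos hV1 (by
        rw [neg_nonpos]; positivity)
    · rw [← Real.rpow_natCast, ← Real.rpow_mul (by linarith)]
      have : -(1 / (n : ℝ)) * n = -1 := by
        field_simp
      rw [this, Real.rpow_neg_one, inv_mul_cancel₀ (by linarith)]
  refine ⟨⟨t • V, by rw [det_smul, Fintype.card_fin, ht]⟩, fun k i => ?_, fun z hz => ?_⟩
  · change |t * V k i| ≤ B
    rw [abs_mul, abs_of_pos ht0]
    exact (mul_le_of_le_one_left (abs_nonneg _) ht1).trans (hVB k i)
  · obtain ⟨u, hu⟩ := hmz z hz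
    refine ⟨u, t * m, by positivity, ?_, ?_⟩
    · exact (mul_le_of_le_one_left (by linarith) ht1).trans (hmV.trans hVle)
    · change (t • V) *ᵥ castVec u = _
      have h1 : W.map (Int.cast : ℤ → ℝ) *ᵥ castVec u = (m : ℝ) • castVec z := by
        ext k
        have := congrFun hu k
        simp only [mulVec, dotProduct, Pi.smul_apply, smul_eq_mul] at this
        simp only [mulVec, dotProduct, castVec, map_apply, Pi.smul_apply, smul_eq_mul]
        exact_mod_cast this
      rw [smul_mulVec, smul_mulVec, h1, mul_smul, smul_comm (m : ℝ)]

theorem exists_det_pos {a : Fin n → ZMod p} (hn : 0 < n) {C : ℝ}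
    (W : Matrix (Fin n) (Fin n) ℤ) (hW : ∀ i, a ⬝ᵥ modVec p (fun k => W k i) = 0)
    (hWB : ∀ k i, |(W k i : ℝ)| ≤ C) (hdet : W.det ≠ 0) :
    ∃ W' : Matrix (Fin n) (Fin n) ℤ, (∀ i, a ⬝ᵥ modVec p (fun k => W' k i) = 0) ∧
      (∀ k i, |(W' k i : ℝ)| ≤ C) ∧ 0 < W'.det := by
  rcases lt_or_gt_of_ne hdet with h | h
  · refine ⟨W.updateCol ⟨0, hn⟩ ((-1 : ℤ) • fun k => W k ⟨0, hn⟩), fun i => ?_, fun k i => ?_, ?_⟩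
    · by_cases hi : i = ⟨0, hn⟩
      · subst hi
        have : modVec p (fun k => -W k ⟨0, hn⟩) = -modVec p (fun k => W k ⟨0, hn⟩) := by
          ext k; simp [modVec]
        simp [this, hW]
      · simpa [hi] using hW i
    · by_cases hi : i = ⟨0, hn⟩
      · subst hi
        simpa using hWB k _
      · simpa [hi] using hWB k i
    · rw [det_updateCol_smul, updateCol_eq_self]
      linarith
  · exact ⟨W, hW, hWB, h⟩

end Sublattice

section PositiveMeasure

variable {n : ℕ}

/-- The hyperplanes modulo `p` containing no integer point of `R • S`. -/
def avoidSet (n p R : ℕ) (S : Set (Fin n → ℝ)) : Set (Fin n → ZMod p) :=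
  {a | ∀ x ∈ scaledPoints S (R : ℝ)⁻¹, ¬ a ⬝ᵥ modVec p x = 0}

/-- The nonzero hyperplanes modulo `p` whose sublattice, rescaled by `1 / R`, meets all the boxes
`axisBox n i` and, after applying `h`, all the sets `S j` with `j ∈ I`. -/
def goodSet (p R : ℕ) (S : ℕ → Set (Fin n → ℝ)) (I : Finset ℕ) (h : SLR n) :
    Set (Fin n → ZMod p) :=
  {a | a ≠ 0 ∧ (∀ i, a ∉ avoidSet n p R (axisBox n i)) ∧
    ∀ j ∈ I, a ∉ avoidSet n p R {y | (h : Matrix (Fin n) (Fin n) ℝ) *ᵥ y ∈ S j}}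

theorem measurableSet_mem_goodSet {p R : ℕ} {S : ℕ → Set (Fin n → ℝ)} {I : Finset ℕ}
    (hS : ∀ j ∈ I, MeasurableSet (S j)) (a : Fin n → ZMod p) :
    MeasurableSet {h : SLR n | a ∈ goodSet p R S I h} := by
  refine (MeasurableSet.const _).inter ((MeasurableSet.const _).inter ?_)
  have : {h : SLR n | ∀ j ∈ I,
      a ∉ avoidSet n p R {y | (h : Matrix (Fin n) (Fin n) ℝ) *ᵥ y ∈ S j}} =
      ⋂ j ∈ I, ⋃ x : Fin n → ℤ, ⋃ _ : a ⬝ᵥ modVec p x = 0,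
        (fun h : SLR n => (h : Matrix (Fin n) (Fin n) ℝ) *ᵥ ((R : ℝ)⁻¹ • castVec x)) ⁻¹' S j := by
    ext h
    simp only [avoidSet, scaledPoints, Set.mem_ofPred_eq, Set.mem_iInter, Set.mem_iUnion,
      Set.mem_preimage, not_forall, not_not, exists_prop]
    exact forall₂_congr fun j _ => exists_congr fun x => and_comm
  change MeasurableSet {h : SLR n | ∀ j ∈ I,
      a ∉ avoidSet n p R {y | (h : Matrix (Fin n) (Fin n) ℝ) *ᵥ y ∈ S j}}
  rw [this]
  exact Finset.measurableSet_biInter _ fun j hj => MeasurableSet.iUnion fun x =>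
    MeasurableSet.iUnion fun _ => measurable_mulVec_SLR _ (hS j hj)

theorem IsJordanRegion.eventually_ncard_avoidSet_le (hn : 3 ≤ n) {S : Set (Fin n → ℝ)}
    (hS : IsJordanRegion S) (hV : 0 < volume.real S) :
    ∀ᶠ R : ℕ in atTop, ∀ p : ℕ, p.Prime → R ^ n < p → p ≤ 2 * R ^ n →
      ((avoidSet n p R S).ncard : ℝ) ≤ 16 / volume.real S * (p : ℝ) ^ n :=
  eventually_ncard_avoid_le hn hS.isBounded hS.measurableSet hS.volume_frontier hS.zero_notMem hV

theorem eventually_card_le_ncard_goodSet (hn : 3 ≤ n) {S : ℕ → Set (Fin n → ℝ)} {I : Finset ℕ}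
    (hS : ∀ j ∈ I, IsJordanRegion (S j) ∧ 0 < volume.real (S j))
    (hI : ∑ j ∈ I, 16 / volume.real (S j) ≤ 1 / 8) (h : SLR n) :
    ∀ᶠ R : ℕ in atTop, ∀ p : ℕ, p.Prime → R ^ n < p → p ≤ 2 * R ^ n →
      p ^ n ≤ 2 * (goodSet p R S I h).ncard := by
  have hn' : (3 : ℝ) ≤ n := by exact_mod_cast hn
  have h1 : ∀ᶠ R : ℕ in atTop, ∀ i : Fin n, ∀ p : ℕ, p.Prime → R ^ n < p → p ≤ 2 * R ^ n →
      ((avoidSet n p R (axisBox n i)).ncard : ℝ) ≤ 1 / 8 / n * (p : ℝ) ^ n := by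
    refine eventually_all.2 fun i => ?_
    have hV := volumeReal_axisBox i
    have hV1 : 128 * (n : ℝ) ≤ volume.real (axisBox n i) := by
      rw [hV]
      calc 128 * (n : ℝ) = (2 * (64 * n : ℝ)) ^ 1 := by ring
        _ ≤ _ := pow_le_pow_right₀ (by linarith) (by omega)
    filter_upwards [(isJordanRegion_axisBox i).eventually_ncard_avoidSet_le hn (by linarith)]
      with R hR p hp hp1 hp2
    refine (hR p hp hp1 hp2).trans ?_
    refine mul_le_mul_of_nonneg_right ?_ (by positivity)
    calc 16 / volume.real (axisBox n i) ≤ 16 / (128 * n) := by gcongr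
      _ = _ := by field_simp; norm_num
  have h2 : ∀ᶠ R : ℕ in atTop, ∀ j ∈ I, ∀ p : ℕ, p.Prime → R ^ n < p → p ≤ 2 * R ^ n →
      ((avoidSet n p R {y | (h : Matrix (Fin n) (Fin n) ℝ) *ᵥ y ∈ S j}).ncard : ℝ)
        ≤ 16 / volume.real (S j) * (p : ℝ) ^ n := by
    refine (Filter.eventually_all_finset I).2 fun j hj => ?_
    have := ((hS j hj).1.preimage_mulVec h).eventually_ncard_avoidSet_le hn
      (by rw [volumeReal_preimage_mulVec]; exact (hS j hj).2)
    rwa [volumeReal_preimage_mulVec] at this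
  filter_upwards [h1, h2] with R h1 h2 p hp hp1 hp2
  have : Fact p.Prime := ⟨hp⟩
  have hcover : (goodSet p R S I h)ᶜ ⊆ {0} ∪ ((⋃ i ∈ (Finset.univ : Finset (Fin n)),
      avoidSet n p R (axisBox n i)) ∪
      ⋃ j ∈ I, avoidSet n p R {y | (h : Matrix (Fin n) (Fin n) ℝ) *ᵥ y ∈ S j}) := by
    intro a ha
    by_contra hcon
    simp only [Set.mem_union, Set.mem_singleton_iff, Set.mem_iUnion, Finset.mem_univ, not_or,
      exists_prop, true_and, not_exists, not_and] at hcon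
    exact ha ⟨hcon.1, hcon.2.1, hcon.2.2⟩
  have hc1 : ((goodSet p R S I h)ᶜ.ncard : ℝ) ≤ 1 + (∑ i : Fin n,
      ((avoidSet n p R (axisBox n i)).ncard : ℝ) + ∑ j ∈ I,
      ((avoidSet n p R {y | (h : Matrix (Fin n) (Fin n) ℝ) *ᵥ y ∈ S j}).ncard : ℝ)) := by
    have e1 := (Set.ncard_le_ncard hcover (Set.toFinite _)).trans (Set.ncard_union_le _ _)
    rw [Set.ncard_singleton] at e1
    have e2 := e1.trans (Nat.add_le_add_left (Set.ncard_union_le _ _) 1)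
    have e3 := e2.trans (Nat.add_le_add_left (Nat.add_le_add
      (Finset.set_ncard_biUnion_le _ _) (Finset.set_ncard_biUnion_le _ _)) 1)
    exact_mod_cast e3
  have hp8 : (8 : ℝ) ≤ (p : ℝ) ^ n := by
    have : 2 ^ 3 ≤ p ^ n :=
      (Nat.pow_le_pow_left hp.two_le 3).trans (Nat.pow_le_pow_right hp.pos hn)
    exact_mod_cast this
  have hb1 : ∑ i : Fin n, ((avoidSet n p R (axisBox n i)).ncard : ℝ) ≤ 1 / 8 * (p : ℝ) ^ n := by
    refine (Finset.sum_le_sum fun i _ => h1 i p hp hp1 hp2).trans (le_of_eq ?_)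
    rw [Finset.sum_const, Finset.card_univ, Fintype.card_fin, nsmul_eq_mul]
    field_simp
  have hb2 : ∑ j ∈ I, ((avoidSet n p R
      {y | (h : Matrix (Fin n) (Fin n) ℝ) *ᵥ y ∈ S j}).ncard : ℝ) ≤ 1 / 8 * (p : ℝ) ^ n := by
    refine (Finset.sum_le_sum fun j hj => h2 j hj p hp hp1 hp2).trans ?_
    rw [← Finset.sum_mul]
    gcongr
  have htot := Set.ncard_add_ncard_compl (goodSet p R S I h)
  rw [Nat.card_eq_fintype_card, Fintype.card_pi_const, ZMod.card] at htot
  have htot' : ((goodSet p R S I h).ncard : ℝ) + ((goodSet p R S I h)ᶜ.ncard : ℝ) =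
      (p : ℝ) ^ n := by
    exact_mod_cast htot
  have : (p : ℝ) ^ n ≤ 2 * ((goodSet p R S I h).ncard : ℝ) := by linarith
  exact_mod_cast this

/-- A bound for the entries of the unimodular matrices built from vectors in the boxes. -/
def entryBound (n : ℕ) : ℝ := 2 * n * (64 * n) + 64 * n

theorem exists_SLR_of_mem_goodSet (hn : 0 < n) {p R : ℕ} (hp : p.Prime) (hR : 0 < R)
    (hRp : R ^ n < p) {S : ℕ → Set (Fin n → ℝ)} {I : Finset ℕ} {M : Matrix (Fin n) (Fin n) ℝ}
    {δ : ℝ} (hS : ∀ j ∈ I, S j ⊆ dilatedSet M δ 1 j) {D : ℕ}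
    (hD1 : (n.factorial : ℝ) * entryBound n ^ n ≤ D)
    (hD2 : ((n.factorial : ℝ) * entryBound n ^ n) ^ 2 ≤ D) {a : Fin n → ZMod p}
    (ha : ∃ h : SLR n, a ∈ goodSet p R S I h) :
    ∃ v : SLR n, (∀ k i, |(v : Matrix (Fin n) (Fin n) ℝ) k i| ≤ entryBound n) ∧
      ∀ h : SLR n, a ∈ goodSet p R S I h → ∀ j ∈ I, h * v ∈ meetSet M δ D j := by
  have : Fact p.Prime := ⟨hp⟩
  have hR' : (0 : ℝ) < R := by exact_mod_cast hR
  obtain ⟨h₀, ha0, hbox, -⟩ := ha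
  have hw : ∀ i, ∃ x : Fin n → ℤ, a ⬝ᵥ modVec p x = 0 ∧ (R : ℝ)⁻¹ • castVec x ∈ axisBox n i := by
    intro i
    have := hbox i
    simp only [avoidSet, scaledPoints, Set.mem_ofPred_eq, not_forall, not_not, exists_prop] at this
    obtain ⟨x, hx1, hx2⟩ := this
    exact ⟨x, hx2, hx1⟩
  choose w hw1 hw2 using hw
  let W₀ : Matrix (Fin n) (Fin n) ℤ := of fun k i => w i k
  have hdet : W₀.det ≠ 0 := by
    intro h0
    have h1 := det_ne_zero_of_mem_axisBox ((R : ℝ)⁻¹ • W₀.map (Int.cast : ℤ → ℝ)) hw2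
    have h2 : (W₀.map (Int.cast : ℤ → ℝ)).det = ((W₀.det : ℤ) : ℝ) :=
      (RingHom.map_det (Int.castRingHom ℝ) W₀).symm
    rw [det_smul, h2, h0] at h1
    simp at h1
  obtain ⟨W, hW, hWB, hWdet⟩ := exists_det_pos (C := entryBound n * R) hn W₀ hw1 (fun k i => by
    have := abs_le_of_mem_axisBox (hw2 i) k
    rw [Pi.smul_apply, smul_eq_mul, abs_mul, abs_of_pos (inv_pos.2 hR'), inv_mul_le_iff₀ hR',
      mul_comm] at this
    exact this) hdet
  obtain ⟨v, hvB, hv⟩ := exists_SLR_of_sublattice hn hR hRp ha0 W hW hWB hWdet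
  refine ⟨v, hvB, fun h hh j hj => ?_⟩
  have := hh.2.2 j hj
  simp only [avoidSet, scaledPoints, Set.mem_ofPred_eq, not_forall, not_not, exists_prop] at this
  obtain ⟨z, hz1, hz2⟩ := this
  obtain ⟨u, t, ht0, ht1, hu⟩ := hv z hz2
  refine ⟨u, ?_⟩
  have he : ((h * v : SLR n) : Matrix (Fin n) (Fin n) ℝ) *ᵥ castVec u =
      t • ((h : Matrix (Fin n) (Fin n) ℝ) *ᵥ ((R : ℝ)⁻¹ • castVec z)) := by
    change ((h : Matrix (Fin n) (Fin n) ℝ) * (v : Matrix (Fin n) (Fin n) ℝ)) *ᵥ castVec u = _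
    rw [← mulVec_mulVec, hu, mulVec_smul]
  rw [he]
  refine dilatedSet_smul_mem ht0 ?_ ?_ (hS j hj hz1)
  · rw [mul_one]; exact ht1.trans hD1
  · rw [mul_one]; exact le_trans (by gcongr) hD2

/-- The matrices of bounded size whose lattices meet the dilated sets with index in `I`. -/
def boundedMeetSet (M : Matrix (Fin n) (Fin n) ℝ) (δ D B : ℝ) (I : Finset ℕ) : Set (SLR n) :=
  {g | (∀ i j, |(g : Matrix (Fin n) (Fin n) ℝ) i j| ≤ B) ∧ ∀ j ∈ I, g ∈ meetSet M δ D j}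

theorem measurableSet_boundedMeetSet (M : Matrix (Fin n) (Fin n) ℝ) (δ D B : ℝ) (I : Finset ℕ) :
    MeasurableSet (boundedMeetSet M δ D B I) := by
  refine (isCompact_entries_le B).measurableSet.inter ?_
  have : {g : SLR n | ∀ j ∈ I, g ∈ meetSet M δ D j} = ⋂ j ∈ I, meetSet M δ D j := by
    ext g; simp
  change MeasurableSet {g : SLR n | ∀ j ∈ I, g ∈ meetSet M δ D j}
  rw [this]
  exact Finset.measurableSet_biInter _ fun j _ => measurableSet_meetSet M δ D j

/-- The matrices with all entries of absolute value less than two. -/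
def smallSet (n : ℕ) : Set (SLR n) := {g | ∀ i j, |(g : Matrix (Fin n) (Fin n) ℝ) i j| < 2}

theorem isOpen_smallSet : IsOpen (smallSet n) := by
  have : smallSet n = ⋂ i, ⋂ j, {g : SLR n | |(g : Matrix (Fin n) (Fin n) ℝ) i j| < 2} := by
    ext g; simp [smallSet]
  rw [this]
  refine isOpen_iInter_of_finite fun i => isOpen_iInter_of_finite fun j => ?_
  exact isOpen_lt (continuous_coe_SLR.matrix_elem i j).abs continuous_const

theorem one_mem_smallSet : (1 : SLR n) ∈ smallSet n := by
  intro i j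
  change |(1 : Matrix (Fin n) (Fin n) ℝ) i j| < 2
  rw [one_apply]
  split_ifs <;> norm_num

theorem le_measure_boundedMeetSet (hn : 3 ≤ n) (ν : Measure (SLR n)) [ν.IsMulRightInvariant]
    (hν0 : ν (smallSet n) ≠ 0) (hνtop : ν (smallSet n) ≠ ⊤) {S : ℕ → Set (Fin n → ℝ)}
    {I : Finset ℕ} {M : Matrix (Fin n) (Fin n) ℝ} {δ : ℝ}
    (hS : ∀ j ∈ I, IsJordanRegion (S j) ∧ S j ⊆ dilatedSet M δ 1 j ∧ 0 < volume.real (S j))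
    (hI : ∑ j ∈ I, 16 / volume.real (S j) ≤ 1 / 8) {D : ℕ}
    (hD1 : (n.factorial : ℝ) * entryBound n ^ n ≤ D)
    (hD2 : ((n.factorial : ℝ) * entryBound n ^ n) ^ 2 ≤ D) :
    ν (smallSet n) / 4 ≤ ν (boundedMeetSet M δ D (n * (2 * entryBound n)) I) := by
  have hprime : ∀ R : ℕ, ∃ p : ℕ, p.Prime ∧ (R ≠ 0 → R ^ n < p ∧ p ≤ 2 * R ^ n) := by
    intro R
    rcases eq_or_ne R 0 with rfl | hR
    · exact ⟨2, Nat.prime_two, fun h => absurd rfl h⟩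
    · obtain ⟨p, hp, h1, h2⟩ := Nat.exists_prime_lt_and_le_two_mul (R ^ n) (pow_ne_zero _ hR)
      exact ⟨p, hp, fun _ => ⟨h1, h2⟩⟩
  choose p hp hpR using hprime
  have : ∀ R, Fact (p R).Prime := fun R => ⟨hp R⟩
  obtain ⟨R, hR, a, ha⟩ := exists_ge_measure_section ν isOpen_smallSet.measurableSet hν0 hνtop
    (fun R => Fin n → ZMod (p R)) (fun R h => goodSet (p R) R S I h)
    (fun R a => measurableSet_mem_goodSet (fun j hj => (hS j hj).1.measurableSet) a)
    (fun h _ => by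
      filter_upwards [eventually_card_le_ncard_goodSet hn
        (fun j hj => ⟨(hS j hj).1, (hS j hj).2.2⟩) hI h, eventually_gt_atTop 0] with R hR hR0
      rw [Fintype.card_pi_const, ZMod.card]
      exact hR _ (hp R) (hpR R hR0.ne').1 (hpR R hR0.ne').2) 1
  have hpos : ν (smallSet n ∩ {h | a ∈ goodSet (p R) R S I h}) ≠ 0 := by
    intro h0
    rw [h0, nonpos_iff_eq_zero, ENNReal.div_eq_zero_iff] at ha
    rcases ha with ha | ha
    · exact hν0 ha
    · exact absurd ha (by norm_num)
  obtain ⟨h₀, hh₀⟩ := nonempty_of_measure_ne_zero hpos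
  obtain ⟨v, hvB, hv⟩ := exists_SLR_of_mem_goodSet (by omega) (hp R) hR (hpR R (by omega)).1
    (fun j hj => (hS j hj).2.1) hD1 hD2 ⟨h₀, hh₀.2⟩
  refine ha.trans ?_
  rw [← measure_preimage_mul_right ν v (boundedMeetSet M δ D (n * (2 * entryBound n)) I)]
  refine measure_mono fun h hh => ⟨fun i j => ?_, hv h hh.2⟩
  change |((h : Matrix (Fin n) (Fin n) ℝ) * (v : Matrix (Fin n) (Fin n) ℝ)) i j| ≤ _
  rw [mul_apply]
  refine (Finset.abs_sum_le_sum_abs _ _).trans ?_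
  refine (Finset.sum_le_card_nsmul _ _ (2 * entryBound n) fun k _ => ?_).trans (by simp)
  rw [abs_mul]
  exact mul_le_mul (hh.1 i k).le (hvB k j) (abs_nonneg _) (by norm_num)

theorem measure_inv_eventuallyMeetSet_ne_zero (hn : 3 ≤ n) {M : Matrix (Fin n) (Fin n) ℝ} {c₀ : ℝ}
    (hc₀ : 0 < c₀) (hvol : volumeAsymp M c₀) {δ : ℝ} (hδ : 0 < δ)
    (μ : Measure (SLR n)) [μ.IsHaarMeasure] : μ (eventuallyMeetSet M δ)⁻¹ ≠ 0 := by
  obtain ⟨S, j₀, hS, hsum⟩ := exists_jordanRegions hn hc₀ hvol hδ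
  obtain ⟨D, hD⟩ := exists_nat_ge (max ((n.factorial : ℝ) * entryBound n ^ n)
    (((n.factorial : ℝ) * entryBound n ^ n) ^ 2))
  set B : ℝ := n * (2 * entryBound n)
  have hcomp : ∀ C : ℝ,
      μ.inv {g : SLR n | ∀ i j, |(g : Matrix (Fin n) (Fin n) ℝ) i j| ≤ C} ≠ ⊤ := fun C => by
    rw [Measure.inv_apply]
    exact (isCompact_entries_le C).inv.measure_lt_top.ne
  have hK0 : μ.inv (smallSet n) ≠ 0 := by
    rw [Measure.inv_apply]
    exact (isOpen_smallSet.inv.measure_pos μ ⟨1, by simpa using one_mem_smallSet⟩).ne'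
  have hKtop : μ.inv (smallSet n) ≠ ⊤ :=
    measure_ne_top_of_subset (fun g hg i j => (hg i j).le) (hcomp 2)
  let E : ℕ → Set (SLR n) := fun J => boundedMeetSet M δ D B (Finset.Ico j₀ J)
  have hE : ∀ J, μ.inv (smallSet n) / 4 ≤ μ.inv (E J) := fun J =>
    le_measure_boundedMeetSet hn μ.inv hK0 hKtop (fun j hj => hS j (Finset.mem_Ico.1 hj).1)
      (hsum J) ((le_max_left _ _).trans hD) ((le_max_right _ _).trans hD)
  have hanti : Antitone E := fun J J' hJ g hg =>
    ⟨hg.1, fun j hj => hg.2 j (Finset.Ico_subset_Ico_right hJ hj)⟩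
  have hlim := tendsto_measure_iInter_atTop (μ := μ.inv)
    (fun J => (measurableSet_boundedMeetSet M δ D B (Finset.Ico j₀ J)).nullMeasurableSet) hanti
    ⟨0, measure_ne_top_of_subset (fun g hg => hg.1) (hcomp B)⟩
  have hle := ge_of_tendsto' hlim hE
  have hsub : ⋂ J, E J ⊆ eventuallyMeetSet M δ := by
    intro g hg
    refine ⟨D, j₀, fun j hj => ?_⟩
    exact (Set.mem_iInter.1 hg (j + 1)).2 j (Finset.mem_Ico.2 ⟨hj, by omega⟩)
  rw [← Measure.inv_apply]
  intro h0
  rw [measure_mono_null hsub h0, nonpos_iff_eq_zero, ENNReal.div_eq_zero_iff] at hle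
  rcases hle with hle | hle
  · exact hK0 hle
  · exact absurd hle (by norm_num)

end PositiveMeasure

theorem eventually_mem_Aset_of_mem_eventuallyMeetSet {n : ℕ}
    {M : Matrix (Fin n) (Fin n) ℝ} {δ : ℝ} (hδ : 0 < δ) {g : SLR n}
    (hg : g ∈ eventuallyMeetSet M (δ / 2)) :
    ∃ j₀ : ℕ, ∀ j : ℕ, j₀ ≤ j → ∃ x : Fin n → ℤ,
      (g : Matrix (Fin n) (Fin n) ℝ) *ᵥ castVec x ∈ Aset M δ j := by
  obtain ⟨D, j₁, hg⟩ := hg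
  obtain ⟨c, hc⟩ : ∃ c : ℕ, D ≤ 2 ^ c := ⟨D, Nat.lt_two_pow_self.le⟩
  have hc' : (D : ℝ) ≤ (2 : ℝ) ^ (c : ℝ) := by
    rw [Real.rpow_natCast]; exact_mod_cast hc
  set κ := 1 / ((n : ℝ) - 2) with hκ
  obtain ⟨j₂, hj₂⟩ := exists_nat_gt ((c + (κ + δ / 2) * c) / (δ / 2))
  refine ⟨max j₁ j₂, fun j hj => ?_⟩
  obtain ⟨x, h1, h2, h3⟩ := hg (j + c) (by have := le_max_left j₁ j₂; omega)
  refine ⟨x, ⟨h1, h2.trans_le ?_⟩, h3.trans_lt ?_⟩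
  · calc (D : ℝ) * (2 : ℝ) ^ (-((j + c : ℕ) : ℝ)) ≤
          (2 : ℝ) ^ (c : ℝ) * (2 : ℝ) ^ (-((j + c : ℕ) : ℝ)) := by gcongr
      _ = _ := by
        rw [← Real.rpow_add (by norm_num)]
        congr 1; push_cast; ring
  · calc (D : ℝ) * (2 : ℝ) ^ ((κ + δ / 2) * ((j + c : ℕ) : ℝ)) ≤
          (2 : ℝ) ^ (c : ℝ) * (2 : ℝ) ^ ((κ + δ / 2) * ((j + c : ℕ) : ℝ)) := by gcongr
      _ = (2 : ℝ) ^ (c + (κ + δ / 2) * ((j + c : ℕ) : ℝ)) := by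
        rw [← Real.rpow_add (by norm_num)]
      _ < _ := by
        apply Real.rpow_lt_rpow_of_exponent_lt (by norm_num)
        have hj2 : (j₂ : ℝ) ≤ j := by exact_mod_cast (le_max_right j₁ j₂).trans hj
        have := hj₂.trans_le hj2
        rw [div_lt_iff₀ (by positivity)] at this
        push_cast
        nlinarith

/-- Let `n ≥ 3`, let `Q₀` satisfy the volume asymptotic condition with constant `c₀ > 0`,
and let `δ > 0`. Then for Haar-almost every `g ∈ SL(n,ℝ)` there is `j₀` such that for all
`j ≥ j₀` the lattice `gℤ^n` meets `A_j`. -/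
theorem lattice_eventually_meets_Aj
    (n : ℕ) (hn : 3 ≤ n) (M : Matrix (Fin n) (Fin n) ℝ) (hM : M.IsSymm)
    (c₀ : ℝ) (hc₀ : 0 < c₀) (hvol : volumeAsymp M c₀)
    (δ : ℝ) (hδ : 0 < δ)
    (μ : Measure (SLR n)) [μ.IsHaarMeasure] :
    ∀ᵐ g : SLR n ∂μ, ∃ j₀ : ℕ, ∀ j : ℕ, j₀ ≤ j →
      ∃ x : Fin n → ℤ,
        (g : Matrix (Fin n) (Fin n) ℝ).mulVec (fun i => (x i : ℝ)) ∈ Aset M δ j := by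
  have hpos := measure_inv_eventuallyMeetSet_ne_zero hn hc₀ hvol (half_pos hδ) μ
  filter_upwards [ae_mem_eventuallyMeetSet (by omega) M (δ / 2) μ hpos] with g hg
  exact eventually_mem_Aset_of_mem_eventuallyMeetSet hδ hg
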